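/- (Corollary 1: consensus criterion without zero-equality weighting matrices.) Consider the multi-agent system of m ≥ 2 agents x_k : ℝ → ℝ^n with ẋ_k(t) = A x_k(t) + B u_k(t−τ_k(t)), u_k(t) = −Σ_{l≠k} a_{kl} K (x_k(t) − x_l(t)), where each delay τ_k : ℝ → ℝ is continuous with 0 ≤ τ_k^l ≤ τ_k(t) ≤ τ_k^u; equivalently, the stacked error state z(t) = (G⊗I_n)x(t) ∈ ℝ^F satisfies ż(t) = Ā z(t) − Σ_{k=1}^m B̄_k z(t−τ_k(t)). Suppose there exist, for each k = 1,…,m: symmetric positive definite matrices P_k ∈ ℝ^{3F×3F}, Q_{1k}, Q_{2k} ∈ ℝ^{F×F}, R_{1k}, R_{2k} ∈ ℝ^{2F×2F}, and arbitrary matrices Y_{ikj} ∈ ℝ^{(1+(3+3N)m)F×F} (i = 1,2,3; j = 1,…,2N+1), such that for every choice of delay values (τ_1(t),…,τ_m(t)) with each τ_k(t) ∈ {τ_k^l, τ_k^u}, the symmetric block matrix [[Π̃, X̄_1, X̄_{23}],[X̄_1ᵀ, −R̄_1, 0],[X̄_{23}ᵀ, 0, −R̄_2]] is negative definite, where Π̃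 = Σ_{k=1}^m { Sym(Π_{2k} P_k Π_{1k}ᵀ) + e_1 Q_{1k} e_1ᵀ + e_{1+k}(Q_{2k}−Q_{1k})e_{1+k}ᵀ − e_{1+m+k} Q_{2k} e_{1+m+k}ᵀ + Π_3(τ_k^l R_{1k} + τ̃_k R_{2k})Π_3ᵀ + Sym(Ȳ_{1k}M̄_{1k}ᵀ + Ȳ_{2k}M̄_{2k}ᵀ + Ȳ_{3k}M̄_{3k}ᵀ) }, R̄_1 = blockdiag over k of τ_k^l · ℐ_N ⊗ R_{1k}, and R̄_2 = blockdiag over k of (τ_k(t)−τ_k^l)·ℐ_N⊗R_{2k} + (τ_k^u−τ_k(t))·ℐ_N⊗R_{2k}. Then the multi-agent system achieves consensus: for all agents i, j, x_i(t) − x_j(t) → 0 as t → ∞. -/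

import Mathlib

open Matrix Kronecker

/-! Formalization of Theorem 1 (individual-delay-reflected consensus criterion) for
multi-agent systems with heterogeneous time-varying delays.

Notation: `m` agents with `n`-dimensional states, `F = n(m−1)`; the agent-difference
(error) state space `ℝ^F` is indexed by `ag m n = Fin (m-1) × Fin n`, the augmented space
`ℝ^{(1+(3+3N)m)F}` by `bg m n N`, and the `(2N+2)F`-dimensional column space of the block
matrices `Ȳ_{ik}`, `M̄_{xk}` (matching the block-diagonal structure of
`ℐ_N ⊗ (2F×2F matrix)`) by `kp m n N = Fin (N+1) × (ag m n ⊕ ag m n)`.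
Paper blocks are 1-based: paper agent index `k ∈ {1,…,m}` is `(k : Fin m)` with paper
value `(k:ℕ)+1`, and `eB f` is the paper's block selector `e_f`. -/

abbrev ag (m n : ℕ) := Fin (m - 1) × Fin n
abbrev bg (m n N : ℕ) := Fin (1 + (3 + 3 * N) * m) × ag m n
abbrev kp (m n N : ℕ) := Fin (N + 1) × (ag m n ⊕ ag m n)

/-- Block selector matrix `e_f ∈ ℝ^{(1+(3+3N)m)F × F}` (1-based block index `f`). -/
def eB (m n N : ℕ) (f : ℕ) : Matrix (bg m n N) (ag m n) ℝ := fun p j =>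
  if (p.1 : ℕ) + 1 = f ∧ p.2 = j then 1 else 0

/-- `Sym(X) = X + Xᵀ`. -/
def symM {α : Type*} (X : Matrix α α ℝ) : Matrix α α ℝ := X + Xᵀ

/-- Tree-type transformation matrix `G = [1_{m−1} | −I_{m−1}]`. -/
def Gm (m : ℕ) : Matrix (Fin (m - 1)) (Fin m) ℝ := fun i j =>
  if (j : ℕ) = 0 then 1 else if (j : ℕ) = (i : ℕ) + 1 then -1 else 0

/-- `U = [0_{m−1} | −I_{m−1}]ᵀ`. -/
def Um (m : ℕ) : Matrix (Fin m) (Fin (m - 1)) ℝ := fun i j =>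
  if (i : ℕ) = (j : ℕ) + 1 then -1 else 0

/-- `E_k`: a single `1` at entry `(k,k)`. -/
def Em (m : ℕ) (k : Fin m) : Matrix (Fin m) (Fin m) ℝ := fun i j =>
  if i = k ∧ j = k then 1 else 0

/-- Graph Laplacian built from the adjacency weights:
`l_{kl} = −a_{kl}` for `k ≠ l`, `l_{kk} = Σ_{l≠k} a_{kl}`. -/
def Lap (m : ℕ) (adj : Fin m → Fin m → ℝ) : Matrix (Fin m) (Fin m) ℝ := fun k l =>
  if k = l then ∑ l' ∈ Finset.univ.erase k, adj k l' else -(adj k l)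

/-- `Ā = I_{m−1} ⊗ A`. -/
def Abar (m n : ℕ) (A : Matrix (Fin n) (Fin n) ℝ) : Matrix (ag m n) (ag m n) ℝ :=
  (1 : Matrix (Fin (m - 1)) (Fin (m - 1)) ℝ) ⊗ₖ A

/-- `B̄_k = G E_k L U ⊗ (BK)`. -/
def Bbar (m n r : ℕ) (adj : Fin m → Fin m → ℝ) (B : Matrix (Fin n) (Fin r) ℝ)
    (K : Matrix (Fin r) (Fin n) ℝ) (k : Fin m) : Matrix (ag m n) (ag m n) ℝ :=
  (Gm m * Em m k * Lap m adj * Um m) ⊗ₖ (B * K)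

/-- The row `e_1Āᵀ − Σ_{k'} e_{1+2m+k'} B̄_{k'}ᵀ` mapping `ζ(t)` to `ż(t)`. -/
def dynRow (m n r N : ℕ) (A : Matrix (Fin n) (Fin n) ℝ) (adj : Fin m → Fin m → ℝ)
    (B : Matrix (Fin n) (Fin r) ℝ) (K : Matrix (Fin r) (Fin n) ℝ) :
    Matrix (bg m n N) (ag m n) ℝ :=
  eB m n N 1 * (Abar m n A)ᵀ
    - ∑ k : Fin m, eB m n N (2 * m + (k : ℕ) + 2) * (Bbar m n r adj B K k)ᵀ

/-- `Π_{1k} = [e_1, τ_k^l e_{1+3m+k}, (τ_k(t)−τ_k^l)e_{1+(3+N)m+k} + (τ_k^u−τ_k(t))e_{1+(3+2N)m+k}]`. -/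
def Pi1 (m n N : ℕ) (τl τu τv : Fin m → ℝ) (k : Fin m) :
    Matrix (bg m n N) (Fin 3 × ag m n) ℝ := fun p c =>
  if c.1 = 0 then eB m n N 1 p c.2
  else if c.1 = 1 then τl k * eB m n N (3 * m + (k : ℕ) + 2) p c.2
  else (τv k - τl k) * eB m n N ((3 + N) * m + (k : ℕ) + 2) p c.2
        + (τu k - τv k) * eB m n N ((3 + 2 * N) * m + (k : ℕ) + 2) p c.2

/-- `Π_{2k} = [e_1Āᵀ − Σ_{k'} e_{1+2m+k'}B̄_{k'}ᵀ, e_1 − e_{1+k}, e_{1+k} − e_{1+m+k}]`. -/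
def Pi2 (m n r N : ℕ) (A : Matrix (Fin n) (Fin n) ℝ) (adj : Fin m → Fin m → ℝ)
    (B : Matrix (Fin n) (Fin r) ℝ) (K : Matrix (Fin r) (Fin n) ℝ) (k : Fin m) :
    Matrix (bg m n N) (Fin 3 × ag m n) ℝ := fun p c =>
  if c.1 = 0 then dynRow m n r N A adj B K p c.2
  else if c.1 = 1 then (eB m n N 1 - eB m n N ((k : ℕ) + 2)) p c.2
  else (eB m n N ((k : ℕ) + 2) - eB m n N (m + (k : ℕ) + 2)) p c.2

/-- `Π_3 = [e_1Āᵀ − Σ_k e_{1+2m+k}B̄_kᵀ, e_1]`. -/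
def Pi3 (m n r N : ℕ) (A : Matrix (Fin n) (Fin n) ℝ) (adj : Fin m → Fin m → ℝ)
    (B : Matrix (Fin n) (Fin r) ℝ) (K : Matrix (Fin r) (Fin n) ℝ) :
    Matrix (bg m n N) (ag m n ⊕ ag m n) ℝ := fun p c =>
  Sum.elim (dynRow m n r N A adj B K p) (eB m n N 1 p) c

/-- `W̄ = [[0, W],[W, 0]] ∈ ℝ^{2F×2F}`. -/
def Wb (m n : ℕ) (W : Matrix (ag m n) (ag m n) ℝ) :
    Matrix (ag m n ⊕ ag m n) (ag m n ⊕ ag m n) ℝ := fun p q =>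
  match p, q with
  | Sum.inl i, Sum.inr j => W i j
  | Sum.inr i, Sum.inl j => W i j
  | _, _ => 0

/-- `γ_{ij} = (−1)^{j−1}(−1)^i C(j−1,i) C(j+i−1,i)`. -/
def gam (i j : ℕ) : ℝ :=
  (-1 : ℝ) ^ (j - 1) * ((-1 : ℝ) ^ i * ((j - 1).choose i : ℝ) * ((j + i - 1).choose i : ℝ))

/-- `ρ_i^{xk}` for `x = 1,2,3` (here `x : Fin 3`, 0-based). -/
def rho (m n N : ℕ) (x : Fin 3) (k : Fin m) (i : ℕ) : Matrix (bg m n N) (ag m n) ℝ :=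
  if x = 0 then
    (if i = 0 then eB m n N 1 - eB m n N ((k : ℕ) + 2)
     else eB m n N 1 - (i : ℝ) • eB m n N ((2 + i) * m + (k : ℕ) + 2))
  else if x = 1 then
    (if i = 0 then eB m n N ((k : ℕ) + 2) - eB m n N (2 * m + (k : ℕ) + 2)
     else eB m n N ((k : ℕ) + 2) - (i : ℝ) • eB m n N ((2 + i + N) * m + (k : ℕ) + 2))
  else
    (if i = 0 then eB m n N (2 * m + (k : ℕ) + 2) - eB m n N (m + (k : ℕ) + 2)
     else eB m n N (2 * m + (k : ℕ) + 2) - (i : ℝ) • eB m n N ((2 + i + 2 * N) * m + (k : ℕ) + 2))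

/-- The scalar coefficient of the even moment matrices:
`τ_k^l`, `τ_k(t)−τ_k^l`, `τ_k^u−τ_k(t)` for `x = 1,2,3`. -/
def coefM (m : ℕ) (τl τu τv : Fin m → ℝ) (x : Fin 3) (k : Fin m) : ℝ :=
  if x = 0 then τl k else if x = 1 then τv k - τl k else τu k - τv k

/-- Iterated-integral block selectors `e_{1+(3+i)m+k}`, `e_{1+(3+i+N)m+k}`, `e_{1+(3+i+2N)m+k}`. -/
def eEven (m n N : ℕ) (x : Fin 3) (k : Fin m) (i : ℕ) : Matrix (bg m n N) (ag m n) ℝ :=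
  if x = 0 then eB m n N ((3 + i) * m + (k : ℕ) + 2)
  else if x = 1 then eB m n N ((3 + i + N) * m + (k : ℕ) + 2)
  else eB m n N ((3 + i + 2 * N) * m + (k : ℕ) + 2)

/-- Odd moment matrix `M_{2j−1}^{xk} = Σ_{i=0}^{j−1} γ_{ij} ρ_i^{xk}`. -/
def Modd (m n N : ℕ) (x : Fin 3) (k : Fin m) (j : ℕ) : Matrix (bg m n N) (ag m n) ℝ :=
  ∑ i ∈ Finset.range j, gam i j • rho m n N x k i

/-- Even moment matrix `M_{2j}^{xk} = coef ⋅ Σ_{i=0}^{j−1} γ_{ij} e_{…}`. -/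
def Meven (m n N : ℕ) (τl τu τv : Fin m → ℝ) (x : Fin 3) (k : Fin m) (j : ℕ) :
    Matrix (bg m n N) (ag m n) ℝ :=
  coefM m τl τu τv x k • ∑ i ∈ Finset.range j, gam i j • eEven m n N x k i

/-- `M̄_{xk} = [M_1^{xk} ⋯ M_{2N+1}^{xk} 0]`, the `jb`-th `2F`-block holding the pair
`(M_{2jb+1}, M_{2jb+2})` (1-based positions), with the final even slot zero. -/
def Mb (m n N : ℕ) (τl τu τv : Fin m → ℝ) (x : Fin 3) (k : Fin m) :
    Matrix (bg m n N) (kp m n N) ℝ := fun p c =>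
  match c.2 with
  | Sum.inl jj => Modd m n N x k ((c.1 : ℕ) + 1) p jj
  | Sum.inr jj => if (c.1 : ℕ) < N then Meven m n N τl τu τv x k ((c.1 : ℕ) + 1) p jj else 0

/-- `Ȳ_{xk} = [Y_{xk1} ⋯ Y_{xk(2N+1)} 0]`, with the same `2F`-block interleaving. -/
def Yb (m n N : ℕ) (Y : Fin 3 → Fin m → Fin (2 * N + 1) → Matrix (bg m n N) (ag m n) ℝ)
    (x : Fin 3) (k : Fin m) : Matrix (bg m n N) (kp m n N) ℝ := fun p c =>
  match c.2 with
  | Sum.inl jj => Y x k ⟨2 * (c.1 : ℕ), by have := c.1.isLt; omega⟩ p jj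
  | Sum.inr jj =>
      if h : 2 * (c.1 : ℕ) + 1 < 2 * N + 1 then Y x k ⟨2 * (c.1 : ℕ) + 1, h⟩ p jj else 0

/-- `Π̃`: the `(1,1)`-block of the LMI of Corollary 1 (without the zero-equality
weighting matrices). -/
def PitildeC (m n r N : ℕ) (A : Matrix (Fin n) (Fin n) ℝ) (adj : Fin m → Fin m → ℝ)
    (B : Matrix (Fin n) (Fin r) ℝ) (K : Matrix (Fin r) (Fin n) ℝ)
    (τl τu τv : Fin m → ℝ)
    (P : Fin m → Matrix (Fin 3 × ag m n) (Fin 3 × ag m n) ℝ)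
    (Q1 Q2 : Fin m → Matrix (ag m n) (ag m n) ℝ)
    (R1 R2 : Fin m → Matrix (ag m n ⊕ ag m n) (ag m n ⊕ ag m n) ℝ)
    (Y : Fin 3 → Fin m → Fin (2 * N + 1) → Matrix (bg m n N) (ag m n) ℝ) :
    Matrix (bg m n N) (bg m n N) ℝ :=
  ∑ k : Fin m,
    (symM (Pi2 m n r N A adj B K k * P k * (Pi1 m n N τl τu τv k)ᵀ)
      + eB m n N 1 * Q1 k * (eB m n N 1)ᵀ
      + eB m n N ((k : ℕ) + 2) * (Q2 k - Q1 k) * (eB m n N ((k : ℕ) + 2))ᵀ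
      - eB m n N (m + (k : ℕ) + 2) * Q2 k * (eB m n N (m + (k : ℕ) + 2))ᵀ
      + Pi3 m n r N A adj B K * (τl k • R1 k + (τu k - τl k) • R2 k) * (Pi3 m n r N A adj B K)ᵀ
      + symM (Yb m n N Y 0 k * (Mb m n N τl τu τv 0 k)ᵀ
          + Yb m n N Y 1 k * (Mb m n N τl τu τv 1 k)ᵀ
          + Yb m n N Y 2 k * (Mb m n N τl τu τv 2 k)ᵀ))

/-- `X̄_1 = [τ_1^l Ȳ_{11}, …, τ_m^l Ȳ_{1m}]`. -/
def X1b (m n N : ℕ) (τl : Fin m → ℝ)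
    (Y : Fin 3 → Fin m → Fin (2 * N + 1) → Matrix (bg m n N) (ag m n) ℝ) :
    Matrix (bg m n N) (Fin m × kp m n N) ℝ := fun p c =>
  τl c.1 * Yb m n N Y 0 c.1 p c.2

/-- `X̄_{23} = [(τ_k(t)−τ_k^l)Ȳ_{2k} + (τ_k^u−τ_k(t))Ȳ_{3k}]_{k=1,…,m}`. -/
def X23b (m n N : ℕ) (τl τu τv : Fin m → ℝ)
    (Y : Fin 3 → Fin m → Fin (2 * N + 1) → Matrix (bg m n N) (ag m n) ℝ) :
    Matrix (bg m n N) (Fin m × kp m n N) ℝ := fun p c =>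
  (τv c.1 - τl c.1) * Yb m n N Y 1 c.1 p c.2 + (τu c.1 - τv c.1) * Yb m n N Y 2 c.1 p c.2

/-- `R̄_1 = blockdiag_k ( τ_k^l ⋅ ℐ_N ⊗ R_{1k} )`. -/
def R1bC (m n N : ℕ) (τl : Fin m → ℝ)
    (R1 : Fin m → Matrix (ag m n ⊕ ag m n) (ag m n ⊕ ag m n) ℝ) :
    Matrix (Fin m × kp m n N) (Fin m × kp m n N) ℝ := fun p c =>
  if p.1 = c.1 ∧ p.2.1 = c.2.1 then
    τl p.1 * ((2 * (p.2.1 : ℕ) + 1 : ℕ) : ℝ) * R1 p.1 p.2.2 c.2.2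
  else 0

/-- `R̄_2 = blockdiag_k ( (τ_k(t)−τ_k^l)ℐ_N⊗R_{2k} + (τ_k^u−τ_k(t))ℐ_N⊗R_{2k} )`. -/
def R2bC (m n N : ℕ) (τl τu τv : Fin m → ℝ)
    (R2 : Fin m → Matrix (ag m n ⊕ ag m n) (ag m n ⊕ ag m n) ℝ) :
    Matrix (Fin m × kp m n N) (Fin m × kp m n N) ℝ := fun p c =>
  if p.1 = c.1 ∧ p.2.1 = c.2.1 then
    ((2 * (p.2.1 : ℕ) + 1 : ℕ) : ℝ) *
      ((τv p.1 - τl p.1) * R2 p.1 p.2.2 c.2.2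
        + (τu p.1 - τv p.1) * R2 p.1 p.2.2 c.2.2)
  else 0

/-- The full LMI block matrix `[[Π̃, X̄_1, X̄_{23}],[∗, −R̄_1, 0],[∗, 0, −R̄_2]]` of
Corollary 1, evaluated at the delay vector `τv`. -/
def LMImatC (m n r N : ℕ) (A : Matrix (Fin n) (Fin n) ℝ) (adj : Fin m → Fin m → ℝ)
    (B : Matrix (Fin n) (Fin r) ℝ) (K : Matrix (Fin r) (Fin n) ℝ)
    (τl τu τv : Fin m → ℝ)
    (P : Fin m → Matrix (Fin 3 × ag m n) (Fin 3 × ag m n) ℝ)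
    (Q1 Q2 : Fin m → Matrix (ag m n) (ag m n) ℝ)
    (R1 R2 : Fin m → Matrix (ag m n ⊕ ag m n) (ag m n ⊕ ag m n) ℝ)
    (Y : Fin 3 → Fin m → Fin (2 * N + 1) → Matrix (bg m n N) (ag m n) ℝ) :
    Matrix (bg m n N ⊕ ((Fin m × kp m n N) ⊕ (Fin m × kp m n N)))
      (bg m n N ⊕ ((Fin m × kp m n N) ⊕ (Fin m × kp m n N))) ℝ :=
  Matrix.fromBlocks
    (PitildeC m n r N A adj B K τl τu τv P Q1 Q2 R1 R2 Y)
    (Matrix.of fun p c => Sum.elim (X1b m n N τl Y p) (X23b m n N τl τu τv Y p) c)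
    (Matrix.of fun p c => Sum.elim (X1b m n N τl Y c) (X23b m n N τl τu τv Y c) p)
    (Matrix.fromBlocks (-(R1bC m n N τl R1)) 0 0 (-(R2bC m n N τl τu τv R2)))

/-- Control input `u_k(t) = −Σ_{l≠k} a_{kl} K (x_k(t) − x_l(t))`. -/
def uCtrl (m n r : ℕ) (K : Matrix (Fin r) (Fin n) ℝ) (adj : Fin m → Fin m → ℝ)
    (x : Fin m → ℝ → Fin n → ℝ) (k : Fin m) (t : ℝ) : Fin r → ℝ :=
  -∑ l ∈ Finset.univ.erase k, adj k l • K.mulVec (x k t - x l t)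


open Polynomial in
lemma aux_ibp_poly (p q : ℝ[X]) (h0 : (p * q).eval 0 = 0) (h1 : (p * q).eval 1 = 0) :
    ∫ u in (0:ℝ)..1, p.eval u * (derivative q).eval u
      = - ∫ u in (0:ℝ)..1, (derivative p).eval u * q.eval u := by
  rw [intervalIntegral.integral_mul_deriv_eq_deriv_mul (u := fun u => p.eval u)
    (u' := fun u => (derivative p).eval u) (v := fun u => q.eval u)
    (fun x _ => p.hasDerivAt x) (fun x _ => q.hasDerivAt x)
    ((derivative p).continuous.intervalIntegrable _ _)
    ((derivative q).continuous.intervalIntegrable _ _)]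
  simp only [eval_mul] at h0 h1
  rw [h0, h1]; ring

open Polynomial in
lemma aux_ibp_iter (j : ℕ) (w : ℝ[X])
    (hw : ∀ k < j, (derivative^[k] w).eval 0 = 0 ∧ (derivative^[k] w).eval 1 = 0) (p : ℝ[X]) :
    ∫ u in (0:ℝ)..1, p.eval u * (derivative^[j] w).eval u
      = (-1)^j * ∫ u in (0:ℝ)..1, (derivative^[j] p).eval u * w.eval u := by
  induction j generalizing p with
  | zero => simp
  | succ j ih =>
    rw [Function.iterate_succ_apply', aux_ibp_poly _ _ (by simp [(hw j (by omega)).1])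
      (by simp [(hw j (by omega)).2]), ih (fun k hk => hw k (by omega))]
    rw [← Function.iterate_succ_apply]
    ring

lemma aux_beta (b : ℕ) : ∀ a : ℕ, ∫ u in (0:ℝ)..1, u ^ a * (1 - u) ^ b
      = (a.factorial * b.factorial : ℝ) / (a + b + 1).factorial := by
  induction b with
  | zero =>
    intro a
    simp [integral_pow, Nat.factorial_succ]
    have : (a.factorial : ℝ) ≠ 0 := by positivity
    field_simp
  | succ b ih =>
    intro a
    have h := intervalIntegral.integral_mul_deriv_eq_deriv_mul (a := 0) (b := 1)
      (u := fun u : ℝ => (1 - u) ^ (b+1)) (u' := fun u : ℝ => ((b+1 : ℕ):ℝ) * (1-u)^b * (-1))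
      (v := fun u : ℝ => u ^ (a+1) / (a+1)) (v' := fun u : ℝ => u ^ a)
      (fun x _ => by
        have := HasDerivAt.fun_pow ((hasDerivAt_id x).const_sub (1:ℝ)) (b+1)
        simpa using this)
      (fun x _ => by
        have := (hasDerivAt_pow (a+1) x).div_const ((a:ℝ)+1)
        convert this using 1
        field_simp; push_cast; simp [mul_comm])
      (Continuous.intervalIntegrable (by fun_prop) _ _)
      (Continuous.intervalIntegrable (by fun_prop) _ _)
    have e1 : ∫ u in (0:ℝ)..1, u ^ a * (1 - u) ^ (b+1) = ∫ u in (0:ℝ)..1, (1 - u) ^ (b+1) * u ^ a := by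
      congr 1; ext u; ring
    have e2 : ∫ u in (0:ℝ)..1, ((b+1 : ℕ):ℝ) * (1-u)^b * (-1) * (u ^ (a+1) / (a+1))
        = -(((b:ℝ)+1)/(a+1)) * ∫ u in (0:ℝ)..1, u ^ (a+1) * (1-u)^b := by
      rw [← intervalIntegral.integral_const_mul]
      congr 1; ext u; push_cast; ring
    rw [e1, h, e2, ih (a+1)]
    have e3 : a + 1 + b + 1 = a + (b+1) + 1 := by ring
    rw [e3]
    simp only [Nat.factorial_succ a, Nat.factorial_succ b]
    have : ((a + (b+1) + 1).factorial : ℝ) ≠ 0 := by positivity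
    push_cast
    field_simp
    simp

/-- Legendre polynomial function on `[0,1]` with the coefficients `gam`. -/
noncomputable def legF (j : ℕ) (u : ℝ) : ℝ := ∑ i ∈ Finset.range (j + 1), gam i (j + 1) * u ^ i

lemma legF_cont (j : ℕ) : Continuous (legF j) := by
  unfold legF; fun_prop

open Polynomial in
lemma legF_eq (j : ℕ) (u : ℝ) :
    legF j u = (-1) ^ j * ((shiftedLegendre j).map (Int.castRingHom ℝ)).eval u := by
  unfold legF shiftedLegendre gam
  simp only [Polynomial.map_sum, eval_finsetSum, Finset.mul_sum]
  apply Finset.sum_congr rfl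
  intro i hi
  have : j + 1 + i - 1 = j + i := by omega
  have h2 : (j+i).choose i = (j+i).choose j := by
    rw [Nat.choose_symm_add]
  simp [this, h2]
  ring

open Polynomial in
lemma legF_ortho_poly (j : ℕ) (p : ℝ[X]) : ∫ u in (0:ℝ)..1, p.eval u * legF j u
    = (1 / (j.factorial : ℝ)) * ∫ u in (0:ℝ)..1, (derivative^[j] p).eval u * (u ^ j * (1 - u)^j) := by
  set w : ℝ[X] := X ^ j * (1 - X) ^ j with hw
  have hr : ((shiftedLegendre j).map (Int.castRingHom ℝ)) = C (1 / (j.factorial : ℝ)) * derivative^[j] w := by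
    have h := congrArg (Polynomial.map (Int.castRingHom ℝ)) (factorial_mul_shiftedLegendre_eq j)
    rw [Polynomial.map_mul, ← Polynomial.iterate_derivative_map] at h
    simp only [Polynomial.map_mul, Polynomial.map_pow, Polynomial.map_X, Polynomial.map_sub,
      Polynomial.map_one, Polynomial.map_natCast] at h
    rw [← hw] at h
    rw [← h, ← mul_assoc, ← C_eq_natCast, ← C_mul]
    have : (j.factorial : ℝ) ≠ 0 := by positivity
    rw [one_div_mul_cancel this]; simp
  have hv : ∀ k < j, (derivative^[k] w).eval 0 = 0 ∧ (derivative^[k] w).eval 1 = 0 := by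
    intro k hk
    constructor
    · have h := pow_sub_dvd_iterate_derivative_of_pow_dvd (p := w) (q := X) (n := j) k ⟨_, hw⟩
      obtain ⟨c, hc⟩ := h
      rw [hc]
      have : j - k ≠ 0 := by omega
      simp [this]
    · have h := pow_sub_dvd_iterate_derivative_of_pow_dvd (p := w) (q := 1 - X) (n := j) k
        ⟨X ^ j, by rw [hw]; ring⟩
      obtain ⟨c, hc⟩ := h
      rw [hc]
      have : j - k ≠ 0 := by omega
      simp [this]
  have h1 : ∀ u, p.eval u * legF j u
      = ((-1)^j * (1 / (j.factorial : ℝ))) * (p.eval u * (derivative^[j] w).eval u) := by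
    intro u; rw [legF_eq, hr]; simp; ring
  simp_rw [h1]
  rw [intervalIntegral.integral_const_mul, aux_ibp_iter j w hv]
  have h2 : ∀ u, w.eval u = u ^ j * (1-u)^j := by intro u; rw [hw]; simp
  simp_rw [h2]
  have h3 : ((-1:ℝ)^j) * (-1)^j = 1 := by rw [← mul_pow]; simp
  calc _ = (((-1:ℝ)^j) * (-1)^j) * ((1 / (j.factorial : ℝ)) * ∫ u in (0:ℝ)..1, (derivative^[j] p).eval u * (u ^ j * (1 - u)^j)) := by ring
    _ = _ := by rw [h3, one_mul]

open Polynomial in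
lemma legF_ortho_lt (i j : ℕ) (h : i < j) : ∫ u in (0:ℝ)..1, legF i u * legF j u = 0 := by
  have h1 : ∀ u, legF i u = (C ((-1)^i) * (shiftedLegendre i).map (Int.castRingHom ℝ)).eval u := by
    intro u; rw [legF_eq]; simp
  simp_rw [h1]
  rw [legF_ortho_poly, iterate_derivative_eq_zero]
  · simp
  · refine lt_of_le_of_lt (natDegree_C_mul_le _ _) (lt_of_le_of_lt natDegree_map_le ?_)
    simpa using h

open Polynomial in
lemma legF_ortho_self (j : ℕ) : ∫ u in (0:ℝ)..1, legF j u * legF j u = 1 / (2 * j + 1 : ℝ) := by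
  have h1 : ∀ u, legF j u = (C ((-1)^j) * (shiftedLegendre j).map (Int.castRingHom ℝ)).eval u := by
    intro u; rw [legF_eq]; simp
  set p : ℝ[X] := C ((-1)^j) * (shiftedLegendre j).map (Int.castRingHom ℝ) with hp
  have hd : p.natDegree ≤ j := by
    refine (natDegree_C_mul_le _ _).trans (natDegree_map_le.trans ?_)
    simp
  have h2 : derivative^[j] p = C ((j.factorial : ℝ) * ((2*j).choose j : ℝ)) := by
    ext k
    rw [coeff_iterate_derivative]
    rcases Nat.eq_zero_or_pos k with rfl | hk
    · have h3 : ((-1:ℝ)^j) * (-1)^j = 1 := by rw [← mul_pow]; simp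
      rw [hp]
      rw [coeff_C_mul, coeff_map, coeff_shiftedLegendre, zero_add, Nat.descFactorial_self, coeff_C_zero]
      simp [two_mul, ← mul_assoc, h3]
    · rw [coeff_C, if_neg (by omega), coeff_eq_zero_of_natDegree_lt (by omega)]; simp
  have := legF_ortho_poly j p
  simp_rw [← h1] at this
  rw [this, h2]
  simp only [eval_C]
  rw [intervalIntegral.integral_const_mul, aux_beta]
  have h4 : ((2*j).choose j : ℝ) = (2*j).factorial / (j.factorial * j.factorial) := by
    rw [Nat.cast_choose ℝ (by omega)]; congr; omega
  rw [h4, show j + j + 1 = 2*j+1 by ring, Nat.factorial_succ]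
  have a1 : (j.factorial : ℝ) ≠ 0 := by positivity
  have a2 : ((2*j).factorial : ℝ) ≠ 0 := by positivity
  push_cast
  field_simp

lemma legF_ortho (i j : ℕ) : ∫ u in (0:ℝ)..1, legF i u * legF j u
    = if i = j then 1 / (2 * j + 1 : ℝ) else 0 := by
  rcases lt_trichotomy i j with h | h | h
  · rw [if_neg h.ne, legF_ortho_lt i j h]
  · subst h; rw [if_pos rfl, legF_ortho_self]
  · rw [if_neg h.ne']
    simp_rw [mul_comm (legF i _)]
    exact legF_ortho_lt j i h

lemma posDef_lower {ι : Type*} [Fintype ι] (M : Matrix ι ι ℝ) (hM : M.PosDef) :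
    ∃ ε > 0, ∀ v : ι → ℝ, ε * (v ⬝ᵥ v) ≤ v ⬝ᵥ M *ᵥ v := by
  have hc1 : Continuous fun v : ι → ℝ => v ⬝ᵥ M *ᵥ v := by
    simp only [dotProduct, mulVec]; fun_prop
  have hc2 : Continuous fun v : ι → ℝ => v ⬝ᵥ v := by
    simp only [dotProduct]; fun_prop
  rcases isEmpty_or_nonempty ι with h | h
  · exact ⟨1, one_pos, fun v => by simp [dotProduct]⟩
  have hK : IsCompact (Metric.sphere (0 : ι → ℝ) 1) := isCompact_sphere _ _
  have hne : (Metric.sphere (0 : ι → ℝ) 1).Nonempty := NormedSpace.sphere_nonempty.2 zero_le_one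
  have hne0 : ∀ v ∈ Metric.sphere (0 : ι → ℝ) 1, v ≠ 0 := by
    intro v hv h0; subst h0; simp at hv
  have hpos : ∀ v : ι → ℝ, v ≠ 0 → 0 < v ⬝ᵥ v := by
    intro v hv
    have := dotProduct_self_star_pos_iff (v := v) |>.2 hv
    simpa using this
  obtain ⟨v0, hv0, hmin⟩ := hK.exists_isMinOn (f := fun v : ι → ℝ => (v ⬝ᵥ M *ᵥ v) / (v ⬝ᵥ v)) hne
    (hc1.continuousOn.div hc2.continuousOn (fun v hv => (hpos v (hne0 v hv)).ne'))
  refine ⟨(v0 ⬝ᵥ M *ᵥ v0) / (v0 ⬝ᵥ v0), div_pos ?_ (hpos _ (hne0 _ hv0)), ?_⟩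
  · simpa using hM.dotProduct_mulVec_pos (hne0 _ hv0)
  · intro v
    by_cases hv : v = 0
    · subst hv; simp
    have hn : ‖v‖ ≠ 0 := norm_ne_zero_iff.2 hv
    have hmem : (‖v‖⁻¹ • v) ∈ Metric.sphere (0 : ι → ℝ) 1 := by
      simp [norm_smul, hn]
    have h1 := hmin hmem
    simp only [Set.mem_ofPred_eq, mulVec_smul, dotProduct_smul, smul_dotProduct, smul_eq_mul] at h1
    rw [← le_div_iff₀ (hpos v hv)]
    refine h1.trans (le_of_eq ?_)
    have := (hpos v hv).ne'
    field_simp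

lemma quad_mul {α β γ : Type*} [Fintype α] [Fintype β] [Fintype γ]
    (X : Matrix α β ℝ) (Q : Matrix β γ ℝ) (Z : Matrix α γ ℝ) (v w : α → ℝ) :
    v ⬝ᵥ (X * Q * Zᵀ) *ᵥ w = (Xᵀ *ᵥ v) ⬝ᵥ Q *ᵥ (Zᵀ *ᵥ w) := by
  rw [← mulVec_mulVec, ← mulVec_mulVec, dotProduct_mulVec, ← mulVec_transpose]

lemma quad_mul2 {α β : Type*} [Fintype α] [Fintype β]
    (X : Matrix α β ℝ) (Z : Matrix α β ℝ) (v w : α → ℝ) :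
    v ⬝ᵥ (X * Zᵀ) *ᵥ w = (Xᵀ *ᵥ v) ⬝ᵥ (Zᵀ *ᵥ w) := by
  rw [← mulVec_mulVec, dotProduct_mulVec, ← mulVec_transpose]

lemma quad_sym {α : Type*} [Fintype α] (X : Matrix α α ℝ) (v : α → ℝ) :
    v ⬝ᵥ (symM X) *ᵥ v = 2 * (v ⬝ᵥ X *ᵥ v) := by
  unfold symM
  rw [add_mulVec, dotProduct_add, mulVec_transpose, dotProduct_comm v (v ᵥ* X), ← dotProduct_mulVec, two_mul]

/-- weighted quadratic form of `ℐ_N ⊗ R`. -/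
noncomputable def rr (m n N : ℕ) (R : Matrix (ag m n ⊕ ag m n) (ag m n ⊕ ag m n) ℝ) (w : kp m n N → ℝ) : ℝ :=
  ∑ j : Fin (N + 1), ((2 * (j : ℕ) + 1 : ℕ) : ℝ) * ((fun a => w (j, a)) ⬝ᵥ R *ᵥ (fun a => w (j, a)))

/-- per-agent summand -/
noncomputable def phi (m n r N : ℕ) (A : Matrix (Fin n) (Fin n) ℝ) (adj : Fin m → Fin m → ℝ)
    (B : Matrix (Fin n) (Fin r) ℝ) (K : Matrix (Fin r) (Fin n) ℝ)
    (τl τu : Fin m → ℝ)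
    (P : Fin m → Matrix (Fin 3 × ag m n) (Fin 3 × ag m n) ℝ)
    (Q1 Q2 : Fin m → Matrix (ag m n) (ag m n) ℝ)
    (R1 R2 : Fin m → Matrix (ag m n ⊕ ag m n) (ag m n ⊕ ag m n) ℝ)
    (Y : Fin 3 → Fin m → Fin (2 * N + 1) → Matrix (bg m n N) (ag m n) ℝ)
    (ζ : bg m n N → ℝ) (w : Fin 3 → Fin m → kp m n N → ℝ) (τv : Fin m → ℝ) (k : Fin m) : ℝ :=
  2 * (((Pi2 m n r N A adj B K k)ᵀ *ᵥ ζ) ⬝ᵥ P k *ᵥ ((Pi1 m n N τl τu τv k)ᵀ *ᵥ ζ))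
  + ((eB m n N 1)ᵀ *ᵥ ζ) ⬝ᵥ Q1 k *ᵥ ((eB m n N 1)ᵀ *ᵥ ζ)
  + ((eB m n N ((k : ℕ) + 2))ᵀ *ᵥ ζ) ⬝ᵥ (Q2 k - Q1 k) *ᵥ ((eB m n N ((k : ℕ) + 2))ᵀ *ᵥ ζ)
  - ((eB m n N (m + (k : ℕ) + 2))ᵀ *ᵥ ζ) ⬝ᵥ Q2 k *ᵥ ((eB m n N (m + (k : ℕ) + 2))ᵀ *ᵥ ζ)
  + ((Pi3 m n r N A adj B K)ᵀ *ᵥ ζ) ⬝ᵥ (τl k • R1 k + (τu k - τl k) • R2 k) *ᵥ ((Pi3 m n r N A adj B K)ᵀ *ᵥ ζ)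
  + ∑ x : Fin 3, 2 * ((((Yb m n N Y x k)ᵀ *ᵥ ζ) ⬝ᵥ ((Mb m n N τl τu τv x k)ᵀ *ᵥ ζ))
      + coefM m τl τu τv x k * (((Yb m n N Y x k)ᵀ *ᵥ ζ) ⬝ᵥ w x k))
  - ∑ x : Fin 3, coefM m τl τu τv x k * rr m n N (if x = 0 then R1 k else R2 k) (w x k)

lemma Pi1_affine (m n N : ℕ) (τl τu : Fin m → ℝ) (k : Fin m) : ∃ X Z, ∀ τv : Fin m → ℝ,
    Pi1 m n N τl τu τv k = X + τv k • Z := by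
  refine ⟨Pi1 m n N τl τu 0 k, Pi1 m n N τl τu 1 k - Pi1 m n N τl τu 0 k, fun τv => ?_⟩
  ext p c
  simp only [Pi1, Matrix.add_apply, Matrix.smul_apply, Matrix.sub_apply, smul_eq_mul]
  split_ifs <;> simp <;> ring

lemma coefM_affine (m : ℕ) (τl τu : Fin m → ℝ) (x : Fin 3) (k : Fin m) : ∃ a b : ℝ, ∀ τv : Fin m → ℝ,
    coefM m τl τu τv x k = a + τv k * b := by
  unfold coefM
  split_ifs
  · exact ⟨τl k, 0, fun τv => by ring⟩
  · exact ⟨-τl k, 1, fun τv => by ring⟩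
  · exact ⟨τu k, -1, fun τv => by ring⟩

lemma Mb_affine (m n N : ℕ) (τl τu : Fin m → ℝ) (x : Fin 3) (k : Fin m) : ∃ X Z, ∀ τv : Fin m → ℝ,
    Mb m n N τl τu τv x k = X + τv k • Z := by
  obtain ⟨a, b, hab⟩ := coefM_affine m τl τu x k
  refine ⟨Mb m n N τl τu 0 x k, Mb m n N τl τu 1 x k - Mb m n N τl τu 0 x k, fun τv => ?_⟩
  ext p ⟨c, d⟩
  rcases d with d | d
  · simp [Mb]
  · simp only [Mb, Meven, Matrix.add_apply, Matrix.smul_apply, Matrix.sub_apply, smul_eq_mul, hab]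
    split_ifs <;> simp <;> ring

lemma phi_affine (m n r N : ℕ) (A : Matrix (Fin n) (Fin n) ℝ) (adj : Fin m → Fin m → ℝ)
    (B : Matrix (Fin n) (Fin r) ℝ) (K : Matrix (Fin r) (Fin n) ℝ)
    (τl τu : Fin m → ℝ)
    (P : Fin m → Matrix (Fin 3 × ag m n) (Fin 3 × ag m n) ℝ)
    (Q1 Q2 : Fin m → Matrix (ag m n) (ag m n) ℝ)
    (R1 R2 : Fin m → Matrix (ag m n ⊕ ag m n) (ag m n ⊕ ag m n) ℝ)
    (Y : Fin 3 → Fin m → Fin (2 * N + 1) → Matrix (bg m n N) (ag m n) ℝ)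
    (ζ : bg m n N → ℝ) (w : Fin 3 → Fin m → kp m n N → ℝ) (k : Fin m) :
    ∃ a b : ℝ, ∀ τv : Fin m → ℝ,
      phi m n r N A adj B K τl τu P Q1 Q2 R1 R2 Y ζ w τv k = a + b * τv k := by
  obtain ⟨X, Z, h1⟩ := Pi1_affine m n N τl τu k
  choose a b h2 using fun x => coefM_affine m τl τu x k
  choose X' Z' h3 using fun x => Mb_affine m n N τl τu x k
  refine ⟨phi m n r N A adj B K τl τu P Q1 Q2 R1 R2 Y ζ w 0 k,
    phi m n r N A adj B K τl τu P Q1 Q2 R1 R2 Y ζ w 1 k - phi m n r N A adj B K τl τu P Q1 Q2 R1 R2 Y ζ w 0 k,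
    fun τv => ?_⟩
  unfold phi
  simp only [h1, h2, h3, Fin.sum_univ_three, transpose_add, transpose_smul, add_mulVec, mulVec_add,
    smul_mulVec, mulVec_smul, dotProduct_add, dotProduct_smul, smul_eq_mul, Pi.zero_apply, Pi.one_apply]
  ring

lemma X1b_quad (m n N : ℕ) (τl : Fin m → ℝ)
    (Y : Fin 3 → Fin m → Fin (2 * N + 1) → Matrix (bg m n N) (ag m n) ℝ)
    (ζ : bg m n N → ℝ) (w : Fin m × kp m n N → ℝ) :
    ζ ⬝ᵥ (X1b m n N τl Y) *ᵥ w = ∑ k, τl k * (((Yb m n N Y 0 k)ᵀ *ᵥ ζ) ⬝ᵥ fun c => w (k, c)) := by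
  rw [dotProduct_mulVec]
  simp only [dotProduct, vecMul, mulVec, X1b, Fintype.sum_prod_type (α₁ := Fin m), Finset.mul_sum,
    Finset.sum_mul, transpose_apply]
  refine Finset.sum_congr rfl fun k _ => Finset.sum_congr rfl fun c _ => Finset.sum_congr rfl fun d _ => ?_
  ring

lemma X23b_quad (m n N : ℕ) (τl τu τv : Fin m → ℝ)
    (Y : Fin 3 → Fin m → Fin (2 * N + 1) → Matrix (bg m n N) (ag m n) ℝ)
    (ζ : bg m n N → ℝ) (w : Fin m × kp m n N → ℝ) :
    ζ ⬝ᵥ (X23b m n N τl τu τv Y) *ᵥ w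
     = ∑ k, ((τv k - τl k) * (((Yb m n N Y 1 k)ᵀ *ᵥ ζ) ⬝ᵥ fun c => w (k, c))
        + (τu k - τv k) * (((Yb m n N Y 2 k)ᵀ *ᵥ ζ) ⬝ᵥ fun c => w (k, c))) := by
  rw [dotProduct_mulVec]
  simp only [dotProduct, vecMul, mulVec, X23b, Fintype.sum_prod_type (α₁ := Fin m), Finset.mul_sum,
    Finset.sum_mul, transpose_apply, ← Finset.sum_add_distrib]
  refine Finset.sum_congr rfl fun k _ => Finset.sum_congr rfl fun c _ => Finset.sum_congr rfl fun d _ => ?_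
  ring

lemma blk_quad (m n N : ℕ) (c : Fin m → ℝ)
    (R : Fin m → Matrix (ag m n ⊕ ag m n) (ag m n ⊕ ag m n) ℝ) (w : Fin m × kp m n N → ℝ)
    (S : Matrix (Fin m × kp m n N) (Fin m × kp m n N) ℝ)
    (hS : ∀ p q, S p q = if p.1 = q.1 ∧ p.2.1 = q.2.1 then
      c p.1 * ((2 * (p.2.1 : ℕ) + 1 : ℕ) : ℝ) * R p.1 p.2.2 q.2.2 else 0) :
    w ⬝ᵥ S *ᵥ w = ∑ k, c k * rr m n N (R k) (fun d => w (k, d)) := by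
  unfold rr
  simp only [dotProduct, mulVec, Fintype.sum_prod_type (α₁ := Fin m),
    Fintype.sum_prod_type (α₁ := Fin (N+1)), hS, Finset.mul_sum]
  refine Finset.sum_congr rfl fun k _ => Finset.sum_congr rfl fun j _ => Finset.sum_congr rfl fun d _ => ?_
  rw [Finset.sum_eq_single k, Finset.sum_eq_single j]
  · refine Finset.sum_congr rfl fun e _ => ?_
    simp; ring
  · intro b _ hb; simp [Ne.symm hb]
  · simp
  · intro b _ hb; simp [Ne.symm hb]
  · simp

lemma LMI_quad (m n r N : ℕ) (A : Matrix (Fin n) (Fin n) ℝ) (adj : Fin m → Fin m → ℝ)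
    (B : Matrix (Fin n) (Fin r) ℝ) (K : Matrix (Fin r) (Fin n) ℝ)
    (τl τu : Fin m → ℝ)
    (P : Fin m → Matrix (Fin 3 × ag m n) (Fin 3 × ag m n) ℝ)
    (Q1 Q2 : Fin m → Matrix (ag m n) (ag m n) ℝ)
    (R1 R2 : Fin m → Matrix (ag m n ⊕ ag m n) (ag m n ⊕ ag m n) ℝ)
    (Y : Fin 3 → Fin m → Fin (2 * N + 1) → Matrix (bg m n N) (ag m n) ℝ)
    (ζ : bg m n N → ℝ) (w : Fin 3 → Fin m → kp m n N → ℝ) (τv : Fin m → ℝ)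
    (hv : ∀ k, τv k = τl k ∨ τv k = τu k) (v : bg m n N ⊕ ((Fin m × kp m n N) ⊕ (Fin m × kp m n N)) → ℝ)
    (hvdef : v = Sum.elim ζ (Sum.elim (fun c => w 0 c.1 c.2)
        (fun c => if τv c.1 = τl c.1 then w 2 c.1 c.2 else w 1 c.1 c.2))) :
    v ⬝ᵥ (LMImatC m n r N A adj B K τl τu τv P Q1 Q2 R1 R2 Y) *ᵥ v
      = ∑ k, phi m n r N A adj B K τl τu P Q1 Q2 R1 R2 Y ζ w τv k := by
  set w1 : Fin m × kp m n N → ℝ := fun c => w 0 c.1 c.2 with hw1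
  set w2 : Fin m × kp m n N → ℝ := fun c => if τv c.1 = τl c.1 then w 2 c.1 c.2 else w 1 c.1 c.2 with hw2
  have e1 : v ⬝ᵥ (LMImatC m n r N A adj B K τl τu τv P Q1 Q2 R1 R2 Y) *ᵥ v
      = ζ ⬝ᵥ (PitildeC m n r N A adj B K τl τu τv P Q1 Q2 R1 R2 Y) *ᵥ ζ
        + 2 * (ζ ⬝ᵥ (X1b m n N τl Y) *ᵥ w1) + 2 * (ζ ⬝ᵥ (X23b m n N τl τu τv Y) *ᵥ w2)
        - w1 ⬝ᵥ (R1bC m n N τl R1) *ᵥ w1 - w2 ⬝ᵥ (R2bC m n N τl τu τv R2) *ᵥ w2 := by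
    have c1 : (Matrix.of fun p c => Sum.elim (X1b m n N τl Y p) (X23b m n N τl τu τv Y p) c)
        = fromCols (X1b m n N τl Y) (X23b m n N τl τu τv Y) := by
      ext i j; rcases j with j | j <;> rfl
    have c2 : (Matrix.of fun p c => Sum.elim (X1b m n N τl Y c) (X23b m n N τl τu τv Y c) p)
        = fromRows (X1b m n N τl Y)ᵀ (X23b m n N τl τu τv Y)ᵀ := by
      ext i j; rcases i with i | i <;> rfl
    rw [hvdef, LMImatC, fromBlocks_mulVec, c1, c2]
    simp only [Sum.elim_comp_inl, Sum.elim_comp_inr]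
    rw [fromCols_mulVec, fromRows_mulVec, fromBlocks_mulVec]
    simp only [Sum.elim_comp_inl, Sum.elim_comp_inr]
    rw [sumElim_dotProduct_sumElim, dotProduct_add (Sum.elim w1 w2), sumElim_dotProduct_sumElim,
      sumElim_dotProduct_sumElim]
    simp only [dotProduct_add, neg_mulVec, dotProduct_neg, zero_mulVec, dotProduct_zero]
    have d1 : w1 ⬝ᵥ (X1b m n N τl Y)ᵀ *ᵥ ζ = ζ ⬝ᵥ (X1b m n N τl Y) *ᵥ w1 := by
      rw [mulVec_transpose, dotProduct_comm, ← dotProduct_mulVec]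
    have d2 : w2 ⬝ᵥ (X23b m n N τl τu τv Y)ᵀ *ᵥ ζ = ζ ⬝ᵥ (X23b m n N τl τu τv Y) *ᵥ w2 := by
      rw [mulVec_transpose, dotProduct_comm, ← dotProduct_mulVec]
    rw [d1, d2]; ring
  rw [e1, X1b_quad, X23b_quad, blk_quad m n N τl R1 w1 (R1bC m n N τl R1) (fun p q => rfl),
    blk_quad m n N (fun k => (τv k - τl k) + (τu k - τv k)) R2 w2 (R2bC m n N τl τu τv R2)
      (fun p q => by simp only [R2bC]; split_ifs <;> ring), PitildeC, sum_mulVec, dotProduct_sum,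
      Finset.mul_sum, Finset.mul_sum,
      ← Finset.sum_add_distrib, ← Finset.sum_add_distrib, ← Finset.sum_sub_distrib, ← Finset.sum_sub_distrib]
  refine Finset.sum_congr rfl fun k _ => ?_
  simp only [add_mulVec, sub_mulVec, dotProduct_add, dotProduct_sub, quad_sym, quad_mul]
  simp only [quad_mul2, phi, add_mulVec, sub_mulVec, dotProduct_add, dotProduct_sub,
    Fin.sum_univ_three, coefM, hw1, hw2, if_true, Fin.reduceEq, if_false]
  rcases hv k with h | h
  · simp only [h, if_true]; ring
  · by_cases h' : τl k = τu k
    · simp only [h, h', if_true]; ring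
    · simp only [h, if_neg (Ne.symm h')]; ring

lemma LMI_main (m n r N : ℕ) (A : Matrix (Fin n) (Fin n) ℝ) (adj : Fin m → Fin m → ℝ)
    (B : Matrix (Fin n) (Fin r) ℝ) (K : Matrix (Fin r) (Fin n) ℝ)
    (τl τu : Fin m → ℝ)
    (P : Fin m → Matrix (Fin 3 × ag m n) (Fin 3 × ag m n) ℝ)
    (Q1 Q2 : Fin m → Matrix (ag m n) (ag m n) ℝ)
    (R1 R2 : Fin m → Matrix (ag m n ⊕ ag m n) (ag m n ⊕ ag m n) ℝ)
    (Y : Fin 3 → Fin m → Fin (2 * N + 1) → Matrix (bg m n N) (ag m n) ℝ)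
    (hLMI : ∀ τv : Fin m → ℝ, (∀ k, τv k = τl k ∨ τv k = τu k) →
      (-(LMImatC m n r N A adj B K τl τu τv P Q1 Q2 R1 R2 Y)).PosDef) :
    ∃ ε > 0, ∀ (ζ : bg m n N → ℝ) (w : Fin 3 → Fin m → kp m n N → ℝ) (τv : Fin m → ℝ),
      (∀ k, τl k ≤ τv k ∧ τv k ≤ τu k) →
      ∑ k, phi m n r N A adj B K τl τu P Q1 Q2 R1 R2 Y ζ w τv k ≤ - (ε * (ζ ⬝ᵥ ζ)) := by
  have hvert : ∀ σ : Fin m → Bool, ∀ k, (fun k => if σ k then τu k else τl k) k = τl k ∨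
      (fun k => if σ k then τu k else τl k) k = τu k := by
    intro σ k; cases h : σ k <;> simp [h]
  choose e he1 he2 using fun σ : Fin m → Bool => posDef_lower _ (hLMI _ (hvert σ))
  obtain ⟨σ0, hσ0⟩ := Finite.exists_min e
  refine ⟨e σ0, he1 σ0, fun ζ w τv hτ => ?_⟩
  choose a b hab using fun k => phi_affine m n r N A adj B K τl τu P Q1 Q2 R1 R2 Y ζ w k
  set σ : Fin m → Bool := fun k => decide (0 ≤ b k) with hσ
  have h1 : ∑ k, phi m n r N A adj B K τl τu P Q1 Q2 R1 R2 Y ζ w τv k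
      ≤ ∑ k, phi m n r N A adj B K τl τu P Q1 Q2 R1 R2 Y ζ w (fun k => if σ k then τu k else τl k) k := by
    refine Finset.sum_le_sum fun k _ => ?_
    rw [hab, hab]
    by_cases hb : 0 ≤ b k
    · simp only [hσ, hb, decide_true, if_true]
      have := mul_le_mul_of_nonneg_left (hτ k).2 hb
      linarith
    · simp only [hσ, hb, decide_false]
      have := mul_le_mul_of_nonpos_left (hτ k).1 (not_le.1 hb).le
      simp; linarith
  refine h1.trans ?_
  have h2 := LMI_quad m n r N A adj B K τl τu P Q1 Q2 R1 R2 Y ζ w _ (hvert σ) _ rfl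
  rw [← h2]
  have h3 := he2 σ (Sum.elim ζ (Sum.elim (fun c => w 0 c.1 c.2)
        (fun c => if (fun k => if σ k then τu k else τl k) c.1 = τl c.1 then w 2 c.1 c.2 else w 1 c.1 c.2)))
  rw [neg_mulVec, dotProduct_neg] at h3
  refine (le_neg_of_le_neg h3).trans (neg_le_neg ?_)
  rw [sumElim_dotProduct_sumElim]
  have p1 : ∀ {ι : Type} [Fintype ι] (v : ι → ℝ), 0 ≤ v ⬝ᵥ v := by
    intro ι _ v; exact Finset.sum_nonneg fun i _ => mul_self_nonneg _
  exact mul_le_mul (hσ0 σ) (le_add_of_nonneg_right (p1 _)) (p1 _) (he1 σ).le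

/-- augmented vector built from its blocks -/
def zetaB (m n N : ℕ) (hm : 0 < m) (z : ag m n → ℝ) (Z : ℕ → Fin m → ag m n → ℝ) : bg m n N → ℝ :=
  fun p => if (p.1 : ℕ) = 0 then z p.2
    else Z (((p.1 : ℕ) - 1) / m) ⟨((p.1 : ℕ) - 1) % m, Nat.mod_lt _ hm⟩ p.2

lemma eB_mulVec (m n N : ℕ) (ζ : bg m n N → ℝ) (f : ℕ) (hf : f < 1 + (3 + 3 * N) * m) :
    (eB m n N (f + 1))ᵀ *ᵥ ζ = fun c => ζ (⟨f, hf⟩, c) := by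
  ext c
  simp only [mulVec, dotProduct, transpose_apply, eB]
  rw [Finset.sum_eq_single (⟨f, hf⟩, c)]
  · simp
  · rintro ⟨a, b⟩ _ hb
    rw [if_neg, zero_mul]
    rintro ⟨h1, h2⟩
    apply hb
    simp only at h1 h2
    subst h2
    have : a = ⟨f, hf⟩ := by ext; simp; omega
    rw [this]
  · simp

lemma eB_zeta1 (m n N : ℕ) (hm : 0 < m) (z : ag m n → ℝ) (Z : ℕ → Fin m → ag m n → ℝ) :
    (eB m n N 1)ᵀ *ᵥ zetaB m n N hm z Z = z := by
  have h := eB_mulVec m n N (zetaB m n N hm z Z) 0 (by omega)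
  refine h.trans ?_
  ext c; simp [zetaB]

lemma eB_zeta (m n N : ℕ) (hm : 0 < m) (z : ag m n → ℝ) (Z : ℕ → Fin m → ag m n → ℝ)
    (q : ℕ) (k : Fin m) (f : ℕ) (hq : q < 3 + 3 * N) (hf : f = q * m + (k : ℕ) + 2) :
    (eB m n N f)ᵀ *ᵥ zetaB m n N hm z Z = Z q k := by
  have hk := k.isLt
  have hlt : q * m + (k : ℕ) + 1 < 1 + (3 + 3 * N) * m := by
    have : (q + 1) * m ≤ (3 + 3 * N) * m := Nat.mul_le_mul_right _ (by omega)
    have e : (q + 1) * m = q * m + m := by ring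
    omega
  rw [hf, eB_mulVec m n N _ _ hlt]
  ext c
  have h1 : (q * m + (k : ℕ)) / m = q := by
    rw [mul_comm, Nat.mul_add_div hm, Nat.div_eq_of_lt hk]; simp
  have h2 : (q * m + (k : ℕ)) % m = k := by
    rw [mul_comm, Nat.mul_add_mod, Nat.mod_eq_of_lt hk]
  simp [zetaB, h1, h2]

lemma zetaB_dot (m n N : ℕ) (hm : 0 < m) (z : ag m n → ℝ) (Z : ℕ → Fin m → ag m n → ℝ) :
    z ⬝ᵥ z ≤ zetaB m n N hm z Z ⬝ᵥ zetaB m n N hm z Z := by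
  have h0 : 0 < 1 + (3 + 3 * N) * m := by omega
  simp only [dotProduct]
  rw [Fintype.sum_prod_type (α₁ := Fin (1 + (3 + 3 * N) * m))]
  refine le_trans (le_of_eq ?_) (Finset.single_le_sum (f := fun a : Fin (1 + (3 + 3 * N) * m) =>
    ∑ c, zetaB m n N hm z Z (a, c) * zetaB m n N hm z Z (a, c))
    (fun a _ => Finset.sum_nonneg fun c _ => mul_self_nonneg _) (Finset.mem_univ ⟨0, h0⟩))
  simp [zetaB]

/-- stack of three vectors -/
def pvec (m n : ℕ) (a b c : ag m n → ℝ) : Fin 3 × ag m n → ℝ := fun p =>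
  if p.1 = 0 then a p.2 else if p.1 = 1 then b p.2 else c p.2

/-- block data -/
def Zd (m n N : ℕ) (zl zu zd : Fin m → ag m n → ℝ) (I : Fin 3 → Fin m → ℕ → ag m n → ℝ) :
    ℕ → Fin m → ag m n → ℝ := fun q k =>
  if q = 0 then zl k else if q = 1 then zu k else if q = 2 then zd k
  else if q < 3 + N then I 0 k (q - 3) else if q < 3 + 2 * N then I 1 k (q - 3 - N)
  else I 2 k (q - 3 - 2 * N)

lemma eEven_zeta (m n N : ℕ) (hm : 0 < m) (z : ag m n → ℝ) (zl zu zd : Fin m → ag m n → ℝ)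
    (I : Fin 3 → Fin m → ℕ → ag m n → ℝ) (x : Fin 3) (k : Fin m) (i : ℕ) (hi : i < N) :
    (eEven m n N x k i)ᵀ *ᵥ zetaB m n N hm z (Zd m n N zl zu zd I) = I x k i := by
  fin_cases x
  · change (eB m n N ((3 + i) * m + (k : ℕ) + 2))ᵀ *ᵥ zetaB m n N hm z (Zd m n N zl zu zd I) = I 0 k i
    rw [eB_zeta m n N hm z _ (3 + i) k _ (by omega) rfl]
    unfold Zd
    rw [if_neg (by omega), if_neg (by omega), if_neg (by omega), if_pos (by omega)]
    simp
  · change (eB m n N ((3 + i + N) * m + (k : ℕ) + 2))ᵀ *ᵥ zetaB m n N hm z (Zd m n N zl zu zd I) = I 1 k i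
    rw [eB_zeta m n N hm z _ (3 + i + N) k _ (by omega) rfl]
    unfold Zd
    rw [if_neg (by omega), if_neg (by omega), if_neg (by omega), if_neg (by omega), if_pos (by omega)]
    simp only [show 3 + i + N - 3 - N = i by omega]
  · change (eB m n N ((3 + i + 2 * N) * m + (k : ℕ) + 2))ᵀ *ᵥ zetaB m n N hm z (Zd m n N zl zu zd I) = I 2 k i
    rw [eB_zeta m n N hm z _ (3 + i + 2 * N) k _ (by omega) rfl]
    unfold Zd
    rw [if_neg (by omega), if_neg (by omega), if_neg (by omega), if_neg (by omega), if_neg (by omega)]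
    simp only [show 3 + i + 2 * N - 3 - 2 * N = i by omega]

/-- right endpoint value -/
def hiV (m n : ℕ) (z : ag m n → ℝ) (zl zd : Fin m → ag m n → ℝ) (x : Fin 3) (k : Fin m) : ag m n → ℝ :=
  if x = 0 then z else if x = 1 then zl k else zd k
/-- left endpoint value -/
def loV (m n : ℕ) (zl zu zd : Fin m → ag m n → ℝ) (x : Fin 3) (k : Fin m) : ag m n → ℝ :=
  if x = 0 then zl k else if x = 1 then zd k else zu k

lemma eB_zl (m n N : ℕ) (hm : 0 < m) (z : ag m n → ℝ) (zl zu zd : Fin m → ag m n → ℝ)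
    (I : Fin 3 → Fin m → ℕ → ag m n → ℝ) (k : Fin m) :
    (eB m n N ((k:ℕ) + 2))ᵀ *ᵥ zetaB m n N hm z (Zd m n N zl zu zd I) = zl k := by
  rw [eB_zeta m n N hm z _ 0 k _ (by omega) (by simp)]; simp [Zd]

lemma eB_zu (m n N : ℕ) (hm : 0 < m) (z : ag m n → ℝ) (zl zu zd : Fin m → ag m n → ℝ)
    (I : Fin 3 → Fin m → ℕ → ag m n → ℝ) (k : Fin m) :
    (eB m n N (m + (k:ℕ) + 2))ᵀ *ᵥ zetaB m n N hm z (Zd m n N zl zu zd I) = zu k := by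
  rw [eB_zeta m n N hm z _ 1 k _ (by omega) (by simp)]; simp [Zd]

lemma eB_zd (m n N : ℕ) (hm : 0 < m) (z : ag m n → ℝ) (zl zu zd : Fin m → ag m n → ℝ)
    (I : Fin 3 → Fin m → ℕ → ag m n → ℝ) (k : Fin m) :
    (eB m n N (2 * m + (k:ℕ) + 2))ᵀ *ᵥ zetaB m n N hm z (Zd m n N zl zu zd I) = zd k := by
  rw [eB_zeta m n N hm z _ 2 k _ (by omega) (by simp)]; simp [Zd]

lemma rho_zeta0 (m n N : ℕ) (hm : 0 < m) (z : ag m n → ℝ) (zl zu zd : Fin m → ag m n → ℝ)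
    (I : Fin 3 → Fin m → ℕ → ag m n → ℝ) (x : Fin 3) (k : Fin m) :
    (rho m n N x k 0)ᵀ *ᵥ zetaB m n N hm z (Zd m n N zl zu zd I)
      = hiV m n z zl zd x k - loV m n zl zu zd x k := by
  fin_cases x <;> simp [rho, hiV, loV, sub_mulVec, eB_zl, eB_zu, eB_zd, eB_zeta1]

lemma rho_zetaS (m n N : ℕ) (hm : 0 < m) (z : ag m n → ℝ) (zl zu zd : Fin m → ag m n → ℝ)
    (I : Fin 3 → Fin m → ℕ → ag m n → ℝ) (x : Fin 3) (k : Fin m) (i : ℕ) (hi : i < N) :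
    (rho m n N x k (i+1))ᵀ *ᵥ zetaB m n N hm z (Zd m n N zl zu zd I)
      = hiV m n z zl zd x k - ((i + 1 : ℕ) : ℝ) • I x k i := by
  rw [← eEven_zeta m n N hm z zl zu zd I x k i hi]
  have e0 : 2 + (i + 1) = 3 + i := by ring
  fin_cases x <;> simp [rho, hiV, eEven, sub_mulVec, eB_zl, eB_zd, eB_zeta1, e0, smul_mulVec]

lemma dynRow_zeta (m n r N : ℕ) (hm : 0 < m) (A : Matrix (Fin n) (Fin n) ℝ) (adj : Fin m → Fin m → ℝ)
    (B : Matrix (Fin n) (Fin r) ℝ) (K : Matrix (Fin r) (Fin n) ℝ)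
    (z : ag m n → ℝ) (zl zu zd : Fin m → ag m n → ℝ)
    (I : Fin 3 → Fin m → ℕ → ag m n → ℝ) :
    (dynRow m n r N A adj B K)ᵀ *ᵥ zetaB m n N hm z (Zd m n N zl zu zd I)
      = Abar m n A *ᵥ z - ∑ k, Bbar m n r adj B K k *ᵥ zd k := by
  simp only [dynRow, transpose_sub, transpose_mul, transpose_transpose, sub_mulVec, transpose_sum,
    sum_mulVec, ← mulVec_mulVec, eB_zeta1, eB_zd]

lemma Pi1_zeta (m n N : ℕ) (hm : 0 < m) (hN : 1 ≤ N) (τl τu τv : Fin m → ℝ)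
    (z : ag m n → ℝ) (zl zu zd : Fin m → ag m n → ℝ)
    (I : Fin 3 → Fin m → ℕ → ag m n → ℝ) (k : Fin m) :
    (Pi1 m n N τl τu τv k)ᵀ *ᵥ zetaB m n N hm z (Zd m n N zl zu zd I)
      = pvec m n z (τl k • I 0 k 0) ((τv k - τl k) • I 1 k 0 + (τu k - τv k) • I 2 k 0) := by
  have h0 := eEven_zeta m n N hm z zl zu zd I 0 k 0 hN
  have h1 := eEven_zeta m n N hm z zl zu zd I 1 k 0 hN
  have h2 := eEven_zeta m n N hm z zl zu zd I 2 k 0 hN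
  have h3 := eB_zeta1 m n N hm z (Zd m n N zl zu zd I)
  simp only [eEven, Fin.reduceEq, if_true, if_false, add_zero] at h0 h1 h2
  generalize zetaB m n N hm z (Zd m n N zl zu zd I) = ζ at *
  rw [← h0, ← h1, ← h2, ← h3]
  ext ⟨a, c⟩
  fin_cases a
  · simp [pvec, mulVec, dotProduct, Pi1]
  · simp [pvec, mulVec, dotProduct, Pi1, Finset.mul_sum, mul_assoc]
  · simp [pvec, mulVec, dotProduct, Pi1, Finset.mul_sum, mul_assoc, add_mul, Finset.sum_add_distrib]

lemma Pi2_zeta (m n r N : ℕ) (hm : 0 < m) (A : Matrix (Fin n) (Fin n) ℝ) (adj : Fin m → Fin m → ℝ)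
    (B : Matrix (Fin n) (Fin r) ℝ) (K : Matrix (Fin r) (Fin n) ℝ)
    (z : ag m n → ℝ) (zl zu zd : Fin m → ag m n → ℝ)
    (I : Fin 3 → Fin m → ℕ → ag m n → ℝ) (k : Fin m) :
    (Pi2 m n r N A adj B K k)ᵀ *ᵥ zetaB m n N hm z (Zd m n N zl zu zd I)
      = pvec m n (Abar m n A *ᵥ z - ∑ k, Bbar m n r adj B K k *ᵥ zd k) (z - zl k) (zl k - zu k) := by
  rw [← dynRow_zeta m n r N hm A adj B K z zl zu zd I]
  have h1 : z - zl k = (eB m n N 1 - eB m n N ((k : ℕ) + 2))ᵀ *ᵥ zetaB m n N hm z (Zd m n N zl zu zd I) := by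
    simp [sub_mulVec, eB_zl, eB_zeta1]
  have h2 : zl k - zu k = (eB m n N ((k : ℕ) + 2) - eB m n N (m + (k : ℕ) + 2))ᵀ *ᵥ zetaB m n N hm z (Zd m n N zl zu zd I) := by
    simp [sub_mulVec, eB_zl, eB_zu]
  rw [h1, h2]
  ext ⟨a, c⟩
  fin_cases a
  · simp [pvec, mulVec, dotProduct, Pi2]
  · simp [pvec, mulVec, dotProduct, Pi2]
  · simp [pvec, mulVec, dotProduct, Pi2]

lemma Pi3_zeta (m n r N : ℕ) (hm : 0 < m) (A : Matrix (Fin n) (Fin n) ℝ) (adj : Fin m → Fin m → ℝ)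
    (B : Matrix (Fin n) (Fin r) ℝ) (K : Matrix (Fin r) (Fin n) ℝ)
    (z : ag m n → ℝ) (zl zu zd : Fin m → ag m n → ℝ)
    (I : Fin 3 → Fin m → ℕ → ag m n → ℝ) :
    (Pi3 m n r N A adj B K)ᵀ *ᵥ zetaB m n N hm z (Zd m n N zl zu zd I)
      = Sum.elim (Abar m n A *ᵥ z - ∑ k, Bbar m n r adj B K k *ᵥ zd k) z := by
  rw [← dynRow_zeta m n r N hm A adj B K z zl zu zd I]
  have h3 := eB_zeta1 m n N hm z (Zd m n N zl zu zd I)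
  generalize zetaB m n N hm z (Zd m n N zl zu zd I) = ζ at *
  rw [← h3]
  ext c
  rcases c with c | c <;> simp [mulVec, dotProduct, Pi3]

lemma YM_cancel (m n N : ℕ) (hm : 0 < m) (τl τu τv : Fin m → ℝ)
    (Y : Fin 3 → Fin m → Fin (2 * N + 1) → Matrix (bg m n N) (ag m n) ℝ)
    (z : ag m n → ℝ) (zl zu zd : Fin m → ag m n → ℝ)
    (I : Fin 3 → Fin m → ℕ → ag m n → ℝ) (w : Fin 3 → Fin m → kp m n N → ℝ) (x : Fin 3) (k : Fin m)
    (hodd : ∀ (j : Fin (N+1)) (c : ag m n),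
      ∑ i ∈ Finset.range ((j:ℕ) + 1), gam i ((j:ℕ)+1) * (hiV m n z zl zd x k c
        - if i = 0 then loV m n zl zu zd x k c else (i:ℝ) * I x k (i-1) c)
        = - (coefM m τl τu τv x k * w x k (j, Sum.inl c)))
    (heven : ∀ (j : Fin (N+1)) (c : ag m n),
      ∑ i ∈ Finset.range ((j:ℕ) + 1), gam i ((j:ℕ)+1) * I x k i c = - w x k (j, Sum.inr c))
    (ζ : bg m n N → ℝ) (hζ : ζ = zetaB m n N hm z (Zd m n N zl zu zd I)) :
    (((Yb m n N Y x k)ᵀ *ᵥ ζ) ⬝ᵥ ((Mb m n N τl τu τv x k)ᵀ *ᵥ ζ))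
      + coefM m τl τu τv x k * (((Yb m n N Y x k)ᵀ *ᵥ ζ) ⬝ᵥ w x k) = 0 := by
  have hh : coefM m τl τu τv x k * (((Yb m n N Y x k)ᵀ *ᵥ ζ) ⬝ᵥ w x k)
      = ((Yb m n N Y x k)ᵀ *ᵥ ζ) ⬝ᵥ (coefM m τl τu τv x k • w x k) := by
    rw [dotProduct_smul, smul_eq_mul]
  rw [hh, ← dotProduct_add, dotProduct]
  refine Finset.sum_eq_zero fun c _ => ?_
  obtain ⟨j, c⟩ := c
  have hj := j.isLt
  rcases c with c | c
  · refine mul_eq_zero_of_right _ ?_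
    have h1 : ((Mb m n N τl τu τv x k)ᵀ *ᵥ ζ) (j, Sum.inl c)
        = ((Modd m n N x k ((j:ℕ)+1))ᵀ *ᵥ ζ) c := by
      simp [mulVec, dotProduct, Mb]
    rw [Pi.add_apply, h1, Modd, transpose_sum, sum_mulVec, Finset.sum_apply]
    rw [Pi.smul_apply, smul_eq_mul, ← sub_neg_eq_add, ← hodd, sub_eq_zero]
    refine Finset.sum_congr rfl fun i hi => ?_
    rw [transpose_smul, smul_mulVec, Pi.smul_apply, smul_eq_mul, hζ]
    rw [Finset.mem_range] at hi
    rcases i with _ | i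
    · rw [rho_zeta0]; simp
    · rw [rho_zetaS _ _ _ _ _ _ _ _ _ _ _ _ (by omega)]; simp
  · by_cases hjN : (j : ℕ) < N
    · refine mul_eq_zero_of_right _ ?_
      have h1 : ((Mb m n N τl τu τv x k)ᵀ *ᵥ ζ) (j, Sum.inr c)
          = ((Meven m n N τl τu τv x k ((j:ℕ)+1))ᵀ *ᵥ ζ) c := by
        simp [mulVec, dotProduct, Mb, hjN]
      rw [Pi.add_apply, h1, Meven, transpose_smul, smul_mulVec, Pi.smul_apply, Pi.smul_apply,
        ← smul_add, transpose_sum, sum_mulVec, Finset.sum_apply,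
        ← sub_neg_eq_add, ← heven, smul_eq_zero, sub_eq_zero]
      right
      refine Finset.sum_congr rfl fun i hi => ?_
      rw [Finset.mem_range] at hi
      rw [transpose_smul, smul_mulVec, Pi.smul_apply, smul_eq_mul, hζ, eEven_zeta _ _ _ _ _ _ _ _ _ _ _ _ (by omega)]
    · refine mul_eq_zero_of_left ?_ _
      simp only [mulVec, dotProduct, transpose_apply, Yb]
      refine Finset.sum_eq_zero fun p _ => ?_
      rw [dif_neg (by omega), zero_mul]

lemma int_dot {ι : Type*} [Fintype ι] (c : ℝ → ℝ) (hc : Continuous c) (h : ℝ → ι → ℝ) (hh : Continuous h)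
    (v : ι → ℝ) : ∫ u in (0:ℝ)..1, c u * (v ⬝ᵥ h u) = v ⬝ᵥ (fun i => ∫ u in (0:ℝ)..1, c u * h u i) := by
  have hh' : ∀ i, Continuous fun u => h u i := fun i => (continuous_apply i).comp hh
  simp only [dotProduct, Finset.mul_sum]
  rw [intervalIntegral.integral_finsetSum]
  · refine Finset.sum_congr rfl fun i _ => ?_
    rw [← intervalIntegral.integral_const_mul]
    congr 1; ext u; ring
  · intro i _
    refine Continuous.intervalIntegrable ?_ _ _
    have := hh' i
    fun_prop

lemma quad_comm {ι : Type*} [Fintype ι] (R : Matrix ι ι ℝ) (hR : R.PosDef) (a b : ι → ℝ) :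
    a ⬝ᵥ R *ᵥ b = b ⬝ᵥ R *ᵥ a := by
  have h : Rᵀ = R := by
    have := hR.1
    rwa [IsHermitian, conjTranspose_eq_transpose_of_trivial] at this
  rw [dotProduct_mulVec, ← mulVec_transpose, h, dotProduct_comm]

lemma quad_cont {ι : Type*} [Fintype ι] (R : Matrix ι ι ℝ) (f g : ℝ → ι → ℝ) (hf : Continuous f)
    (hg : Continuous g) : Continuous fun u => f u ⬝ᵥ R *ᵥ g u := by
  have hf' : ∀ i, Continuous fun u => f u i := fun i => (continuous_apply i).comp hf
  have hg' : ∀ i, Continuous fun u => g u i := fun i => (continuous_apply i).comp hg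
  simp only [dotProduct, mulVec]; fun_prop

lemma quad_nonneg {ι : Type*} [Fintype ι] (R : Matrix ι ι ℝ) (hR : R.PosDef) (v : ι → ℝ) :
    0 ≤ v ⬝ᵥ R *ᵥ v := by
  obtain ⟨ε, h1, h2⟩ := posDef_lower R hR
  refine le_trans ?_ (h2 v)
  exact mul_nonneg h1.le (Finset.sum_nonneg fun _ _ => mul_self_nonneg _)

lemma bessel {ι : Type*} [Fintype ι] (R : Matrix ι ι ℝ) (hR : R.PosDef) (N : ℕ) (ξ : ℝ → ι → ℝ)
    (hξ : Continuous ξ) (μ : Fin (N+1) → ι → ℝ)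
    (hμ : ∀ j i, μ j i = ∫ u in (0:ℝ)..1, legF j u * ξ u i) :
    ∑ j : Fin (N+1), ((2 * (j:ℕ) + 1 : ℕ) : ℝ) * (μ j ⬝ᵥ R *ᵥ μ j) ≤ ∫ u in (0:ℝ)..1, ξ u ⬝ᵥ R *ᵥ ξ u := by
  set g : ℝ → ι → ℝ := fun u => ∑ j : Fin (N+1), (((2 * (j:ℕ) + 1 : ℕ) : ℝ) * legF j u) • μ j with hg
  have hgc : Continuous g := by
    have := legF_cont
    rw [hg]
    fun_prop
  have key : ∀ h : ℝ → ι → ℝ, Continuous h → ∫ u in (0:ℝ)..1, g u ⬝ᵥ R *ᵥ h u =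
      ∑ j : Fin (N+1), ((2 * (j:ℕ) + 1 : ℕ) : ℝ) * (μ j ⬝ᵥ R *ᵥ (fun i => ∫ u in (0:ℝ)..1, legF j u * h u i)) := by
    intro h hh
    have e1 : ∀ u, g u ⬝ᵥ R *ᵥ h u = ∑ j : Fin (N+1), ((2 * (j:ℕ) + 1 : ℕ) : ℝ) * (legF j u * ((μ j ᵥ* R) ⬝ᵥ h u)) := by
      intro u
      rw [hg]
      rw [sum_dotProduct]
      refine Finset.sum_congr rfl fun j _ => ?_
      rw [smul_dotProduct, smul_eq_mul, dotProduct_mulVec]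
      ring
    simp only [e1]
    rw [intervalIntegral.integral_finsetSum]
    · refine Finset.sum_congr rfl fun j _ => ?_
      rw [intervalIntegral.integral_const_mul, int_dot _ (legF_cont j) _ hh, dotProduct_mulVec]
    · intro j _
      refine Continuous.intervalIntegrable ?_ _ _
      have h1 := legF_cont j
      have h2 : ∀ i, Continuous fun u => h u i := fun i => (continuous_apply i).comp hh
      simp only [dotProduct]
      fun_prop
  have k1 : ∫ u in (0:ℝ)..1, g u ⬝ᵥ R *ᵥ ξ u = ∑ j : Fin (N+1), ((2 * (j:ℕ) + 1 : ℕ) : ℝ) * (μ j ⬝ᵥ R *ᵥ μ j) := by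
    rw [key ξ hξ]
    refine Finset.sum_congr rfl fun j _ => ?_
    rw [show (fun i => ∫ u in (0:ℝ)..1, legF j u * ξ u i) = μ j from funext fun i => (hμ j i).symm]
  have k2 : ∫ u in (0:ℝ)..1, g u ⬝ᵥ R *ᵥ g u = ∑ j : Fin (N+1), ((2 * (j:ℕ) + 1 : ℕ) : ℝ) * (μ j ⬝ᵥ R *ᵥ μ j) := by
    rw [key g hgc]
    refine Finset.sum_congr rfl fun j _ => ?_
    have : (fun i => ∫ u in (0:ℝ)..1, legF j u * g u i) = μ j := by
      funext i
      have e : ∀ u, legF j u * g u i = ∑ l : Fin (N+1), (((2 * (l:ℕ) + 1 : ℕ) : ℝ) * μ l i) * (legF j u * legF l u) := by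
        intro u
        simp only [hg, Finset.sum_apply, Pi.smul_apply, smul_eq_mul, Finset.mul_sum]
        refine Finset.sum_congr rfl fun l _ => ?_
        ring
      simp only [e]
      rw [intervalIntegral.integral_finsetSum]
      · simp only [intervalIntegral.integral_const_mul, legF_ortho]
        rw [Finset.sum_eq_single j]
        · have : ((2 * (j:ℕ) + 1 : ℕ) : ℝ) ≠ 0 := by positivity
          simp
          push_cast at this
          field_simp
        · intro b _ hb
          rw [if_neg, mul_zero]
          intro h; exact hb (Fin.ext h.symm)
        · simp
      · intro l _
        refine Continuous.intervalIntegrable ?_ _ _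
        have := legF_cont j
        have := legF_cont l
        fun_prop
    rw [this]
  have k3 : 0 ≤ ∫ u in (0:ℝ)..1, (ξ u ⬝ᵥ R *ᵥ ξ u - 2 * (g u ⬝ᵥ R *ᵥ ξ u) + g u ⬝ᵥ R *ᵥ g u) := by
    refine intervalIntegral.integral_nonneg (by norm_num) fun u _ => ?_
    have h := quad_nonneg R hR (ξ u - g u)
    rw [mulVec_sub, sub_dotProduct, dotProduct_sub, dotProduct_sub, quad_comm R hR (ξ u) (g u)] at h
    linarith
  have c1 := quad_cont R ξ ξ hξ hξ
  have c2 := quad_cont R g ξ hgc hξ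
  have c3 := quad_cont R g g hgc hgc
  rw [intervalIntegral.integral_add, intervalIntegral.integral_sub, intervalIntegral.integral_const_mul, k1, k2] at k3
  · linarith
  · exact c1.intervalIntegrable _ _
  · exact (continuous_const.mul c2).intervalIntegrable _ _
  · exact (c1.sub (continuous_const.mul c2)).intervalIntegrable _ _
  · exact c3.intervalIntegrable _ _

lemma moment_ibp (f f' : ℝ → ℝ) (hf : ∀ t, HasDerivAt f (f' t) t) (hf' : Continuous f') (lo len : ℝ) (i : ℕ) :
    ∫ u in (0:ℝ)..1, u ^ i * (len * f' (lo + u * len)) =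
      f (lo + len) - if i = 0 then f lo else (i:ℝ) * ∫ u in (0:ℝ)..1, u ^ (i-1) * f (lo + u * len) := by
  have hfc : Continuous f := continuous_iff_continuousAt.2 fun t => (hf t).continuousAt
  have hd : ∀ u : ℝ, HasDerivAt (fun u => f (lo + u * len)) (len * f' (lo + u * len)) u := by
    intro u
    have h1 : HasDerivAt (fun u : ℝ => lo + u * len) len u := by
      simpa using ((hasDerivAt_id u).mul_const len).const_add lo
    have := (hf (lo + u * len)).comp u h1
    rw [mul_comm]; exact this
  have hd2 : ∀ u : ℝ, HasDerivAt (fun u : ℝ => u ^ i) ((i:ℝ) * u ^ (i-1)) u := fun u => hasDerivAt_pow i u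
  have hp := intervalIntegral.integral_mul_deriv_eq_deriv_mul (a := (0:ℝ)) (b := 1)
    (u := fun u : ℝ => u ^ i) (v := fun u => f (lo + u * len)) (u' := fun u => (i:ℝ) * u ^ (i-1))
    (v' := fun u => len * f' (lo + u * len))
    (fun u _ => hd2 u) (fun u _ => hd u) (Continuous.intervalIntegrable (by fun_prop) _ _)
    (Continuous.intervalIntegrable (by fun_prop) _ _)
  rw [hp]
  simp only [mul_assoc, intervalIntegral.integral_const_mul]
  rcases i with _ | i
  · simp
  · simp

lemma legF_even (f : ℝ → ℝ) (hf : Continuous f) (lo len : ℝ) (j : ℕ) :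
    ∑ i ∈ Finset.range (j+1), gam i (j+1) * ∫ u in (0:ℝ)..1, u ^ i * f (lo + u * len)
      = ∫ u in (0:ℝ)..1, legF j u * f (lo + u * len) := by
  simp only [legF, Finset.sum_mul]
  rw [intervalIntegral.integral_finsetSum]
  · refine Finset.sum_congr rfl fun i _ => ?_
    rw [← intervalIntegral.integral_const_mul]
    congr 1; ext u; ring
  · intro i _
    exact Continuous.intervalIntegrable (by fun_prop) _ _

lemma legF_odd (f f' : ℝ → ℝ) (hf : ∀ t, HasDerivAt f (f' t) t) (hf' : Continuous f') (lo len : ℝ) (j : ℕ) :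
    ∑ i ∈ Finset.range (j+1), gam i (j+1) * (f (lo + len) - if i = 0 then f lo else
        (i:ℝ) * ∫ u in (0:ℝ)..1, u ^ (i-1) * f (lo + u * len))
      = len * ∫ u in (0:ℝ)..1, legF j u * f' (lo + u * len) := by
  rw [← legF_even f' hf' lo len j, Finset.mul_sum]
  refine Finset.sum_congr rfl fun i _ => ?_
  rw [← moment_ibp f f' hf hf' lo len i]
  have : ∀ u : ℝ, u ^ i * (len * f' (lo + u * len)) = len * (u ^ i * f' (lo + u * len)) := fun u => by ring
  simp only [this, intervalIntegral.integral_const_mul]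
  ring

lemma ftc01 (f f' : ℝ → ℝ) (hf : ∀ t, HasDerivAt f (f' t) t) (hf' : Continuous f') (lo len : ℝ) :
    len * ∫ u in (0:ℝ)..1, f' (lo + u * len) = f (lo + len) - f lo := by
  have := moment_ibp f f' hf hf' lo len 0
  simpa [intervalIntegral.integral_const_mul] using this

/-- primitive -/
noncomputable def prim (g : ℝ → ℝ) (t : ℝ) : ℝ := ∫ s in (0:ℝ)..t, g s

lemma prim_deriv (g : ℝ → ℝ) (hg : Continuous g) (t : ℝ) : HasDerivAt (prim g) (g t) t :=
  (hg.integral_hasStrictDerivAt 0 t).hasDerivAt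

lemma prim_cont (g : ℝ → ℝ) (hg : Continuous g) : Continuous (prim g) :=
  continuous_iff_continuousAt.2 fun t => (prim_deriv g hg t).continuousAt

lemma prim_mono (g : ℝ → ℝ) (hg : Continuous g) (h0 : ∀ t, 0 ≤ g t) : Monotone (prim g) :=
  monotone_of_deriv_nonneg (fun t => (prim_deriv g hg t).differentiableAt)
    (fun t => by rw [(prim_deriv g hg t).deriv]; exact h0 t)

lemma prim_prim (g : ℝ → ℝ) (hg : Continuous g) (hm : Monotone g) (a b : ℝ) (hab : a ≤ b) :
    prim g b - prim g a ≤ (b - a) * g b := by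
  have h := ftc01 (prim g) g (prim_deriv g hg) hg a (b - a)
  rw [show a + (b - a) = b by ring] at h
  rw [← h]
  refine mul_le_mul_of_nonneg_left ?_ (by linarith)
  calc ∫ u in (0:ℝ)..1, g (a + u * (b - a)) ≤ ∫ u in (0:ℝ)..1, g b := by
        refine intervalIntegral.integral_mono_on (by norm_num) (Continuous.intervalIntegrable (by fun_prop) _ _)
          (by simp) fun u hu => hm ?_
        nlinarith [hu.1, hu.2]
    _ = g b := by simp

lemma quad_deriv {ι : Type*} [Fintype ι] (P : Matrix ι ι ℝ) (hP : P.PosDef) (f : ℝ → ι → ℝ) (f' : ι → ℝ) (t : ℝ)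
    (hf : ∀ i, HasDerivAt (fun s => f s i) (f' i) t) :
    HasDerivAt (fun s => f s ⬝ᵥ P *ᵥ f s) (2 * (f' ⬝ᵥ P *ᵥ f t)) t := by
  have h : HasDerivAt (fun s => f s ⬝ᵥ P *ᵥ f s) (f' ⬝ᵥ P *ᵥ f t + f t ⬝ᵥ P *ᵥ f') t := by
    simp only [dotProduct, mulVec]
    rw [← Finset.sum_add_distrib]
    refine HasDerivAt.fun_sum fun i _ => ?_
    refine (hf i).mul (HasDerivAt.fun_sum fun j _ => ?_)
    exact (hf j).const_mul _
  rw [quad_comm P hP (f t) f', ← two_mul] at h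
  exact h

lemma shift_deriv (g g' : ℝ → ℝ) (hg : ∀ t, HasDerivAt g (g' t) t) (a t : ℝ) :
    HasDerivAt (fun s => g (s - a)) (g' (t - a)) t := by
  have := (hg (t - a)).comp t ((hasDerivAt_id t).sub_const a)
  rw [mul_one] at this
  exact this

/-- left endpoints -/
def loT (m : ℕ) (τl τu τv : Fin m → ℝ) (t : ℝ) (x : Fin 3) (k : Fin m) : ℝ :=
  if x = 0 then t - τl k else if x = 1 then t - τv k else t - τu k

/-- right endpoints -/
def hiT (m : ℕ) (τl τv : Fin m → ℝ) (t : ℝ) (x : Fin 3) (k : Fin m) : ℝ :=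
  if x = 0 then t else if x = 1 then t - τl k else t - τv k

lemma loT_add (m : ℕ) (τl τu τv : Fin m → ℝ) (t : ℝ) (x : Fin 3) (k : Fin m) :
    loT m τl τu τv t x k + coefM m τl τu τv x k = hiT m τl τv t x k := by
  unfold loT coefM hiT
  split_ifs <;> ring

/-- moments -/
noncomputable def IM (m n : ℕ) (τl τu τv : Fin m → ℝ) (z : ℝ → ag m n → ℝ) (t : ℝ)
    (x : Fin 3) (k : Fin m) (i : ℕ) (c : ag m n) : ℝ :=
  ∫ u in (0:ℝ)..1, u ^ i * z (loT m τl τu τv t x k + u * coefM m τl τu τv x k) c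

/-- stacked derivative and state -/
def xiT (m n : ℕ) (z zd : ℝ → ag m n → ℝ) (t : ℝ) : ag m n ⊕ ag m n → ℝ := Sum.elim (zd t) (z t)

/-- Legendre moments -/
noncomputable def wM (m n N : ℕ) (τl τu τv : Fin m → ℝ) (z zd : ℝ → ag m n → ℝ) (t : ℝ)
    (x : Fin 3) (k : Fin m) (p : kp m n N) : ℝ :=
  - ∫ u in (0:ℝ)..1, legF p.1 u * xiT m n z zd (loT m τl τu τv t x k + u * coefM m τl τu τv x k) p.2

/-- augmented vector at time t -/
noncomputable def zetaT (m n N : ℕ) (hm : 0 < m) (τl τu τv : Fin m → ℝ) (z : ℝ → ag m n → ℝ) (t : ℝ) :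
    bg m n N → ℝ :=
  zetaB m n N hm (z t) (Zd m n N (fun k => z (t - τl k)) (fun k => z (t - τu k)) (fun k => z (t - τv k))
    (IM m n τl τu τv z t))

lemma YM_zero (m n N : ℕ) (hm : 0 < m) (τl τu τv : Fin m → ℝ)
    (Y : Fin 3 → Fin m → Fin (2 * N + 1) → Matrix (bg m n N) (ag m n) ℝ)
    (z zd : ℝ → ag m n → ℝ) (hz : ∀ t c, HasDerivAt (fun s => z s c) (zd t c) t) (hzd : Continuous zd)
    (t : ℝ) (x : Fin 3) (k : Fin m) :
    (((Yb m n N Y x k)ᵀ *ᵥ zetaT m n N hm τl τu τv z t) ⬝ᵥ ((Mb m n N τl τu τv x k)ᵀ *ᵥ zetaT m n N hm τl τu τv z t))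
      + coefM m τl τu τv x k * (((Yb m n N Y x k)ᵀ *ᵥ zetaT m n N hm τl τu τv z t) ⬝ᵥ wM m n N τl τu τv z zd t x k) = 0 := by
  have hzd' : ∀ c, Continuous fun s => zd s c := fun c => (continuous_apply c).comp hzd
  have hzc : ∀ c, Continuous fun s => z s c := fun c =>
    continuous_iff_continuousAt.2 fun t => (hz t c).continuousAt
  refine YM_cancel m n N hm τl τu τv Y _ _ _ _ (IM m n τl τu τv z t) (wM m n N τl τu τv z zd t) x k ?_ ?_ _ rfl
  · intro j c
    have h := legF_odd (fun s => z s c) (fun s => zd s c) (fun t => hz t c) (hzd' c)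
      (loT m τl τu τv t x k) (coefM m τl τu τv x k) j
    rw [loT_add] at h
    have e1 : hiV m n (z t) (fun k => z (t - τl k)) (fun k => z (t - τv k)) x k = z (hiT m τl τv t x k) := by
      unfold hiV hiT; split_ifs <;> rfl
    have e2 : loV m n (fun k => z (t - τl k)) (fun k => z (t - τu k)) (fun k => z (t - τv k)) x k
        = z (loT m τl τu τv t x k) := by
      unfold loV loT; split_ifs <;> rfl
    rw [e1, e2]
    simp only [IM, wM, xiT, Sum.elim_inl]
    rw [h]; ring
  · intro j c
    have h := legF_even (fun s => z s c) (hzc c) (loT m τl τu τv t x k) (coefM m τl τu τv x k) j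
    simp only [IM, wM, xiT, Sum.elim_inr]
    rw [h]; ring

lemma xiT_cont (m n : ℕ) (z zd : ℝ → ag m n → ℝ) (hz : Continuous z) (hzd : Continuous zd) :
    Continuous (xiT m n z zd) := by
  refine continuous_pi fun i => ?_
  rcases i with i | i
  · exact (continuous_apply i).comp hzd
  · exact (continuous_apply i).comp hz

lemma rr_bound (m n N : ℕ) (τl τu τv : Fin m → ℝ) (z zd : ℝ → ag m n → ℝ) (hz : Continuous z)
    (hzd : Continuous zd) (t : ℝ) (x : Fin 3) (k : Fin m)
    (R : Matrix (ag m n ⊕ ag m n) (ag m n ⊕ ag m n) ℝ) (hR : R.PosDef) (h0 : 0 ≤ coefM m τl τu τv x k) :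
    coefM m τl τu τv x k * rr m n N R (wM m n N τl τu τv z zd t x k) ≤
      prim (fun s => xiT m n z zd s ⬝ᵥ R *ᵥ xiT m n z zd s) (hiT m τl τv t x k)
      - prim (fun s => xiT m n z zd s ⬝ᵥ R *ᵥ xiT m n z zd s) (loT m τl τu τv t x k) := by
  have hx := xiT_cont m n z zd hz hzd
  have hq := quad_cont R _ _ hx hx
  rw [← loT_add, ← ftc01 _ _ (prim_deriv _ hq) hq]
  refine mul_le_mul_of_nonneg_left ?_ h0
  refine le_trans (le_of_eq ?_) (bessel R hR N
    (fun u => xiT m n z zd (loT m τl τu τv t x k + u * coefM m τl τu τv x k)) (by fun_prop)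
    (fun j i => ∫ u in (0:ℝ)..1, legF j u * xiT m n z zd (loT m τl τu τv t x k + u * coefM m τl τu τv x k) i)
    (fun _ _ => rfl))
  unfold rr
  refine Finset.sum_congr rfl fun j _ => ?_
  have : (fun a => wM m n N τl τu τv z zd t x k (j, a)) =
    -(fun i => ∫ u in (0:ℝ)..1, legF j u * xiT m n z zd (loT m τl τu τv t x k + u * coefM m τl τu τv x k) i) := rfl
  rw [this, mulVec_neg, neg_dotProduct, dotProduct_neg, neg_neg]

lemma agent_lyap (m n r N : ℕ) (hm : 0 < m) (hN : 1 ≤ N) (A : Matrix (Fin n) (Fin n) ℝ) (adj : Fin m → Fin m → ℝ)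
    (B : Matrix (Fin n) (Fin r) ℝ) (K : Matrix (Fin r) (Fin n) ℝ)
    (τl τu : Fin m → ℝ) (τ : Fin m → ℝ → ℝ)
    (hτbound : ∀ k t, 0 ≤ τl k ∧ τl k ≤ τ k t ∧ τ k t ≤ τu k)
    (P : Fin m → Matrix (Fin 3 × ag m n) (Fin 3 × ag m n) ℝ)
    (Q1 Q2 : Fin m → Matrix (ag m n) (ag m n) ℝ)
    (R1 R2 : Fin m → Matrix (ag m n ⊕ ag m n) (ag m n ⊕ ag m n) ℝ)
    (Y : Fin 3 → Fin m → Fin (2 * N + 1) → Matrix (bg m n N) (ag m n) ℝ)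
    (hP : ∀ k, (P k).PosDef) (hQ1 : ∀ k, (Q1 k).PosDef) (hQ2 : ∀ k, (Q2 k).PosDef)
    (hR1 : ∀ k, (R1 k).PosDef) (hR2 : ∀ k, (R2 k).PosDef)
    (z zd : ℝ → ag m n → ℝ) (hz : ∀ t c, HasDerivAt (fun s => z s c) (zd t c) t) (hzd : Continuous zd)
    (hdyn : ∀ t, zd t = Abar m n A *ᵥ z t - ∑ k, Bbar m n r adj B K k *ᵥ z (t - τ k t)) (k : Fin m) :
    ∃ (V V' : ℝ → ℝ) (c : ℝ), 0 < c ∧ (∀ t, HasDerivAt V (V' t) t) ∧ (∀ t, c * (z t ⬝ᵥ z t) ≤ V t) ∧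
      ∀ t, V' t ≤ phi m n r N A adj B K τl τu P Q1 Q2 R1 R2 Y
        (zetaT m n N hm τl τu (fun k => τ k t) z t) (wM m n N τl τu (fun k => τ k t) z zd t) (fun k => τ k t) k := by
  have hzc : ∀ c, Continuous fun s => z s c := fun c =>
    continuous_iff_continuousAt.2 fun t => (hz t c).continuousAt
  have hzC : Continuous z := continuous_pi hzc
  have hx := xiT_cont m n z zd hzC hzd
  have q1 := quad_cont (Q1 k) z z hzC hzC
  have q2 := quad_cont (Q2 k) z z hzC hzC
  have r1 := quad_cont (R1 k) _ _ hx hx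
  have r2 := quad_cont (R2 k) _ _ hx hx
  have hl := (hτbound k 0).1
  have hlu : τl k ≤ τu k := (hτbound k 0).2.1.trans (hτbound k 0).2.2
  set Zp : ℝ → ag m n → ℝ := fun t c => prim (fun s => z s c) t with hZp
  have hZpd : ∀ c t, HasDerivAt (fun s => Zp s c) (z t c) t := fun c t => prim_deriv _ (hzc c) t
  set η : ℝ → Fin 3 × ag m n → ℝ := fun t => pvec m n (z t) (Zp t - Zp (t - τl k)) (Zp (t - τl k) - Zp (t - τu k)) with hη
  set η' : ℝ → Fin 3 × ag m n → ℝ := fun t => pvec m n (zd t) (z t - z (t - τl k)) (z (t - τl k) - z (t - τu k)) with hη'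
  have hηd : ∀ t p, HasDerivAt (fun s => η s p) (η' t p) t := by
    rintro t ⟨a, c⟩
    simp only [hη, hη', pvec]
    split_ifs
    · exact hz t c
    · exact (hZpd c t).sub (shift_deriv _ _ (hZpd c) _ _)
    · exact (shift_deriv _ _ (hZpd c) _ _).sub (shift_deriv _ _ (hZpd c) _ _)
  set g1 := fun s => z s ⬝ᵥ Q1 k *ᵥ z s with hg1
  set g2 := fun s => z s ⬝ᵥ Q2 k *ᵥ z s with hg2
  set f1 := fun s => xiT m n z zd s ⬝ᵥ R1 k *ᵥ xiT m n z zd s with hf1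
  set f2 := fun s => xiT m n z zd s ⬝ᵥ R2 k *ᵥ xiT m n z zd s with hf2
  have mg1 := prim_mono g1 q1 fun s => quad_nonneg _ (hQ1 k) _
  have mg2 := prim_mono g2 q2 fun s => quad_nonneg _ (hQ2 k) _
  have mf1 := prim_mono f1 r1 fun s => quad_nonneg _ (hR1 k) _
  have mf2 := prim_mono f2 r2 fun s => quad_nonneg _ (hR2 k) _
  have pf1 := prim_cont f1 r1
  have pf2 := prim_cont f2 r2
  obtain ⟨c, hc, hcP⟩ := posDef_lower (P k) (hP k)
  refine ⟨fun t => η t ⬝ᵥ P k *ᵥ η t + (prim g1 t - prim g1 (t - τl k))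
      + (prim g2 (t - τl k) - prim g2 (t - τu k))
      + (τl k * prim f1 t - (prim (prim f1) t - prim (prim f1) (t - τl k)))
      + ((τu k - τl k) * prim f2 t - (prim (prim f2) (t - τl k) - prim (prim f2) (t - τu k))),
    fun t => 2 * (η' t ⬝ᵥ P k *ᵥ η t) + (g1 t - g1 (t - τl k)) + (g2 (t - τl k) - g2 (t - τu k))
      + (τl k * f1 t - (prim f1 t - prim f1 (t - τl k)))
      + ((τu k - τl k) * f2 t - (prim f2 (t - τl k) - prim f2 (t - τu k))), c, hc, ?_, ?_, ?_⟩
  · intro t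
    have d1 := prim_deriv g1 q1
    have d2 := prim_deriv g2 q2
    have d3 := prim_deriv f1 r1
    have d4 := prim_deriv f2 r2
    have d5 := prim_deriv _ pf1
    have d6 := prim_deriv _ pf2
    exact ((((quad_deriv (P k) (hP k) η (η' t) t (hηd t)).add ((d1 t).sub (shift_deriv _ _ d1 _ _))).add
      ((shift_deriv _ _ d2 _ _).sub (shift_deriv _ _ d2 _ _))).add
      (((d3 t).const_mul _).sub ((d5 t).sub (shift_deriv _ _ d5 _ _)))).add
      (((d4 t).const_mul _).sub ((shift_deriv _ _ d6 _ _).sub (shift_deriv _ _ d6 _ _)))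
  · intro t
    have e1 : z t ⬝ᵥ z t ≤ η t ⬝ᵥ η t := by
      simp only [dotProduct, Fintype.sum_prod_type (α₁ := Fin 3), Fin.sum_univ_three]
      have a1 : 0 ≤ ∑ c, η t (1, c) * η t (1, c) := Finset.sum_nonneg fun _ _ => mul_self_nonneg _
      have a2 : 0 ≤ ∑ c, η t (2, c) * η t (2, c) := Finset.sum_nonneg fun _ _ => mul_self_nonneg _
      have a3 : ∑ c, η t (0, c) * η t (0, c) = ∑ c, z t c * z t c := by simp [hη, pvec]
      linarith
    have e2 := hcP (η t)
    have e3 := mul_le_mul_of_nonneg_left e1 hc.le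
    have e4 := mg1 (show t - τl k ≤ t by linarith)
    have e5 := mg2 (show t - τu k ≤ t - τl k by linarith)
    have e6 := prim_prim _ pf1 mf1 (t - τl k) t (by linarith)
    have e7 := prim_prim _ pf2 mf2 (t - τu k) (t - τl k) (by linarith)
    have e8 := mul_le_mul_of_nonneg_left (mf2 (show t - τl k ≤ t by linarith)) (show 0 ≤ τu k - τl k by linarith)
    rw [show t - (t - τl k) = τl k by ring] at e6
    rw [show t - τl k - (t - τu k) = τu k - τl k by ring] at e7
    linarith
  · intro t
    obtain ⟨-, b1, b2⟩ := hτbound k t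
    unfold phi
    simp only [YM_zero m n N hm τl τu (fun k => τ k t) Y z zd hz hzd t _ k]
    have hIZ : ∀ x, coefM m τl τu (fun k => τ k t) x k • IM m n τl τu (fun k => τ k t) z t x k 0
        = Zp (hiT m τl (fun k => τ k t) t x k) - Zp (loT m τl τu (fun k => τ k t) t x k) := by
      intro x
      ext c
      have := ftc01 _ _ (hZpd c) (hzc c) (loT m τl τu (fun k => τ k t) t x k) (coefM m τl τu (fun k => τ k t) x k)
      rw [loT_add] at this
      simpa [IM] using this
    have i0 := hIZ 0
    have i1 := hIZ 1
    have i2 := hIZ 2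
    simp only [coefM, hiT, loT, Fin.reduceEq, if_true, if_false, one_ne_zero] at i0 i1 i2
    have s0 := rr_bound m n N τl τu (fun k => τ k t) z zd hzC hzd t 0 k (R1 k) (hR1 k) (by simpa [coefM] using hl)
    have s1 := rr_bound m n N τl τu (fun k => τ k t) z zd hzC hzd t 1 k (R2 k) (hR2 k) (by simpa [coefM] using b1)
    have s2 := rr_bound m n N τl τu (fun k => τ k t) z zd hzC hzd t 2 k (R2 k) (hR2 k) (by simpa [coefM] using b2)
    simp only [hiT, loT, Fin.reduceEq, if_true, if_false, one_ne_zero] at s0 s1 s2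
    unfold zetaT
    rw [Pi1_zeta _ _ _ _ hN, Pi2_zeta, Pi3_zeta, eB_zeta1, eB_zl, eB_zu, ← hdyn t, i0, i1, i2, sub_add_sub_cancel]
    have t1 : Sum.elim (zd t) (z t) ⬝ᵥ (τl k • R1 k + (τu k - τl k) • R2 k) *ᵥ Sum.elim (zd t) (z t)
        = τl k * f1 t + (τu k - τl k) * f2 t := by
      rw [add_mulVec, smul_mulVec, smul_mulVec, dotProduct_add, dotProduct_smul, dotProduct_smul]
      rfl
    rw [t1, sub_mulVec, dotProduct_sub, Fin.sum_univ_three (f := fun x => coefM _ _ _ _ x k * _)]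
    simp only [Fin.reduceEq, if_true, if_false, one_ne_zero, mul_zero, Finset.sum_const_zero]
    simp only [hg1, hg2, hη, hη']
    linarith

lemma LU_dot (M : ℕ) (adj : Fin (M+1) → Fin (M+1) → ℝ) (k : Fin (M+1)) (y : Fin (M+1) → ℝ) :
    ∑ j : Fin (M+1-1), (Lap (M+1) adj * Um (M+1)) k j * (y 0 - y ⟨(j:ℕ)+1, by omega⟩)
      = ∑ l ∈ Finset.univ.erase k, adj k l * (y k - y l) := by
  have h1 : ∀ j : Fin M, (Lap (M+1) adj * Um (M+1)) k j = - Lap (M+1) adj k j.succ := by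
    intro j
    rw [Matrix.mul_apply, Finset.sum_eq_single j.succ]
    · simp [Um]
    · intro b _ hb
      simp only [Um]
      rw [if_neg, mul_zero]
      intro h; apply hb; ext; simpa using h
    · simp
  have h2 : ∑ j : Fin (M+1-1), (Lap (M+1) adj * Um (M+1)) k j * (y 0 - y ⟨(j:ℕ)+1, by omega⟩)
      = - ∑ l, Lap (M+1) adj k l * (y 0 - y l) := by
    rw [Fin.sum_univ_succ (f := fun l => Lap (M+1) adj k l * (y 0 - y l)), sub_self, mul_zero, zero_add,
      ← Finset.sum_neg_distrib]
    refine Finset.sum_congr rfl fun j _ => ?_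
    have := h1 j
    erw [this]
    rw [neg_mul]
    rfl
  rw [h2, ← Finset.add_sum_erase _ _ (Finset.mem_univ k)]
  have h3 : ∑ l ∈ Finset.univ.erase k, Lap (M+1) adj k l * (y 0 - y l)
      = ∑ l ∈ Finset.univ.erase k, -(adj k l * (y 0 - y l)) := by
    refine Finset.sum_congr rfl fun l hl => ?_
    have : k ≠ l := (Finset.ne_of_mem_erase hl).symm
    simp [Lap, this]
  rw [h3]
  simp only [Lap, if_true, Finset.sum_mul]
  rw [← Finset.sum_add_distrib, ← Finset.sum_neg_distrib]
  refine Finset.sum_congr rfl fun l _ => ?_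
  ring

lemma G_dot (M : ℕ) (i : Fin (M+1-1)) (v : Fin (M+1) → ℝ) :
    ∑ k, Gm (M+1) i k * v k = v 0 - v ⟨(i:ℕ)+1, by omega⟩ := by
  have h : ∀ k, Gm (M+1) i k * v k = (if k = 0 then v k else 0) - (if k = ⟨(i:ℕ)+1, by omega⟩ then v k else 0) := by
    intro k
    simp only [Gm, Fin.ext_iff, Fin.val_zero]
    by_cases h1 : (k:ℕ) = 0
    · simp [h1]
    · by_cases h2 : (k:ℕ) = (i:ℕ) + 1 <;> simp [h1, h2]
  simp only [h, Finset.sum_sub_distrib]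
  simp

lemma GELU (M : ℕ) (adj : Fin (M+1) → Fin (M+1) → ℝ) (k : Fin (M+1)) (i j : Fin (M+1-1)) :
    (Gm (M+1) * Em (M+1) k * Lap (M+1) adj * Um (M+1)) i j = Gm (M+1) i k * (Lap (M+1) adj * Um (M+1)) k j := by
  rw [Matrix.mul_assoc, Matrix.mul_apply]
  have h : ∀ l, (Gm (M+1) * Em (M+1) k) i l = if l = k then Gm (M+1) i k else 0 := by
    intro l
    rw [Matrix.mul_apply]
    by_cases hl : l = k
    · simp [Em, hl]
    · simp [Em, hl]
  simp [h]

lemma Bbar_dot (M n r : ℕ) (adj : Fin (M+1) → Fin (M+1) → ℝ) (B : Matrix (Fin n) (Fin r) ℝ)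
    (K : Matrix (Fin r) (Fin n) ℝ) (x : Fin (M+1) → ℝ → Fin n → ℝ) (k : Fin (M+1)) (t : ℝ)
    (i : Fin (M+1-1)) (c : Fin n) :
    (Bbar (M+1) n r adj B K k *ᵥ fun p => x 0 t p.2 - x ⟨(p.1:ℕ)+1, by omega⟩ t p.2) (i, c)
      = - (Gm (M+1) i k * (B *ᵥ uCtrl (M+1) n r K adj x k t) c) := by
  have e1 : (B *ᵥ uCtrl (M+1) n r K adj x k t) c
      = - ∑ d, (B * K) c d * ∑ l ∈ Finset.univ.erase k, adj k l * (x k t d - x l t d) := by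
    unfold uCtrl
    simp only [← mulVec_smul]
    rw [← mulVec_sum, mulVec_neg, mulVec_mulVec, Pi.neg_apply]
    congr 1
    simp only [mulVec, dotProduct]
    refine Finset.sum_congr rfl fun d _ => ?_
    simp [Finset.sum_apply]
  rw [e1, mul_neg, neg_neg]
  simp only [mulVec, dotProduct, Bbar, Fintype.sum_prod_type (α₁ := Fin (M+1-1)), kroneckerMap_apply, GELU]
  rw [Finset.sum_comm, Finset.mul_sum]
  refine Finset.sum_congr rfl fun d _ => ?_
  rw [← LU_dot M adj k (fun l => x l t d), Finset.mul_sum, Finset.mul_sum]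
  refine Finset.sum_congr rfl fun j _ => ?_
  ring

lemma z_dyn (M n r : ℕ) (A : Matrix (Fin n) (Fin n) ℝ) (B : Matrix (Fin n) (Fin r) ℝ)
    (K : Matrix (Fin r) (Fin n) ℝ) (adj : Fin (M+1) → Fin (M+1) → ℝ) (τ : Fin (M+1) → ℝ → ℝ)
    (x : Fin (M+1) → ℝ → Fin n → ℝ)
    (hdyn : ∀ (k : Fin (M+1)) (t : ℝ), HasDerivAt (x k)
      (A.mulVec (x k t) + B.mulVec (uCtrl (M+1) n r K adj x k (t - τ k t))) t)
    (z : ℝ → ag (M+1) n → ℝ) (hz : z = fun t p => x 0 t p.2 - x ⟨(p.1:ℕ)+1, by omega⟩ t p.2)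
    (t : ℝ) (p : ag (M+1) n) :
    HasDerivAt (fun s => z s p) ((Abar (M+1) n A *ᵥ z t - ∑ k, Bbar (M+1) n r adj B K k *ᵥ z (t - τ k t)) p) t := by
  obtain ⟨i, c⟩ := p
  have h0 := (hasDerivAt_pi.1 (hdyn 0 t) c).sub (hasDerivAt_pi.1 (hdyn ⟨(i:ℕ)+1, by omega⟩ t) c)
  have e : (Abar (M+1) n A *ᵥ z t - ∑ k, Bbar (M+1) n r adj B K k *ᵥ z (t - τ k t)) (i, c)
      = (A.mulVec (x 0 t) + B.mulVec (uCtrl (M+1) n r K adj x 0 (t - τ 0 t))) c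
        - (A.mulVec (x ⟨(i:ℕ)+1, by omega⟩ t) + B.mulVec (uCtrl (M+1) n r K adj x ⟨(i:ℕ)+1, by omega⟩ (t - τ ⟨(i:ℕ)+1, by omega⟩ t))) c := by
    have hB : ∀ k, (Bbar (M+1) n r adj B K k *ᵥ z (t - τ k t)) (i, c) =
      - (Gm (M+1) i k * (B *ᵥ uCtrl (M+1) n r K adj x k (t - τ k t)) c) := by
      intro k
      rw [hz]
      exact Bbar_dot M n r adj B K x k (t - τ k t) i c
    rw [Pi.sub_apply, Finset.sum_apply]
    simp only [hB, Finset.sum_neg_distrib, sub_neg_eq_add, Pi.add_apply]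
    rw [G_dot M i (fun k => (B *ᵥ uCtrl (M+1) n r K adj x k (t - τ k t)) c)]
    have hA : (Abar (M+1) n A *ᵥ z t) (i, c) = (A *ᵥ x 0 t) c - (A *ᵥ x ⟨(i:ℕ)+1, by omega⟩ t) c := by
      rw [hz]
      simp only [mulVec, dotProduct, Abar, Fintype.sum_prod_type (α₁ := Fin (M+1-1)), kroneckerMap_apply]
      rw [Finset.sum_eq_single i]
      · simp [mul_sub]
      · intro b _ hb
        simp [Matrix.one_apply_ne hb.symm]
      · simp
    rw [hA]; ring
  rw [e, hz]
  exact h0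

lemma conv_zero (f f' V V' : ℝ → ℝ) (hf : ∀ t, HasDerivAt f (f' t) t) (hV : ∀ t, HasDerivAt V (V' t) t)
    (ε : ℝ) (hε : 0 < ε) (hV' : ∀ t, V' t ≤ -(ε * f t)) (hf0 : ∀ t, 0 ≤ f t) (hV0 : ∀ t, 0 ≤ V t)
    (C : ℝ) (hC : 0 ≤ C) (hfC : ∀ t, 0 ≤ t → f' t ≤ C) : Filter.Tendsto f Filter.atTop (nhds 0) := by
  have lim : ∀ W W' : ℝ → ℝ, (∀ t, HasDerivAt W (W' t) t) → (∀ t, 0 ≤ t → W' t ≤ 0) → (∀ t, 0 ≤ W t) →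
      ∃ L, Filter.Tendsto W Filter.atTop (nhds L) := by
    intro W W' h1 h2 h3
    have hanti : AntitoneOn W (Set.Ici 0) := by
      refine antitoneOn_of_deriv_nonpos (convex_Ici 0) (fun t _ => (h1 t).continuousAt.continuousWithinAt)
        (fun t _ => (h1 t).differentiableAt.differentiableWithinAt) fun t ht => ?_
      rw [(h1 t).deriv]
      rw [interior_Ici] at ht
      exact h2 t (le_of_lt ht)
    have ha : Antitone fun t => W (max t 0) := fun a b hab =>
      hanti (Set.mem_Ici.2 (le_max_right _ _)) (Set.mem_Ici.2 (le_max_right _ _)) (max_le_max_right _ hab)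
    refine ⟨_, (tendsto_atTop_ciInf ha ⟨0, ?_⟩).congr' ?_⟩
    · rintro _ ⟨t, rfl⟩; exact h3 _
    · filter_upwards [Filter.eventually_ge_atTop 0] with t ht
      rw [max_eq_left ht]
  obtain ⟨L1, hL1⟩ := lim V V' hV (fun t _ => (hV' t).trans (by nlinarith [hf0 t])) hV0
  obtain ⟨L2, hL2⟩ := lim (fun t => f t * f t + (2 * C / ε) * V t)
    (fun t => (f' t * f t + f t * f' t) + (2 * C / ε) * V' t)
    (fun t => ((hf t).mul (hf t)).add ((hV t).const_mul _))
    (fun t ht => by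
      have h1 := mul_le_mul_of_nonneg_left (hV' t) (show 0 ≤ 2 * C / ε by positivity)
      have h2 : 2 * C / ε * -(ε * f t) = - (2 * C * f t) := by field_simp
      rw [h2] at h1
      have h3 := mul_le_mul_of_nonneg_right (hfC t ht) (hf0 t)
      nlinarith)
    (fun t => add_nonneg (mul_self_nonneg _) (mul_nonneg (by positivity) (hV0 t)))
  have hsq : Filter.Tendsto (fun t => f t * f t) Filter.atTop (nhds (L2 - (2 * C / ε) * L1)) := by
    refine (hL2.sub (hL1.const_mul _)).congr fun t => ?_
    ring
  have hfl : Filter.Tendsto f Filter.atTop (nhds (Real.sqrt (L2 - (2 * C / ε) * L1))) := by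
    refine ((Real.continuous_sqrt.tendsto _).comp hsq).congr fun t => ?_
    exact Real.sqrt_mul_self (hf0 t)
  set ℓ := Real.sqrt (L2 - (2 * C / ε) * L1) with hℓ
  have hℓ0 : 0 ≤ ℓ := Real.sqrt_nonneg _
  rcases hℓ0.eq_or_lt with h | h
  · rw [← h] at hfl; exact hfl
  exfalso
  obtain ⟨T, hT⟩ := Filter.eventually_atTop.1 (hfl.eventually (lt_mem_nhds (show ℓ / 2 < ℓ by linarith)))
  set W : ℝ → ℝ := fun t => V t + (ε * (ℓ / 2)) * t with hW
  have hWd : ∀ t, HasDerivAt W (V' t + (ε * (ℓ / 2)) * 1) t := fun t =>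
    (hV t).add ((hasDerivAt_id t).const_mul _)
  have hanti : AntitoneOn W (Set.Ici T) := by
    refine antitoneOn_of_deriv_nonpos (convex_Ici T) (fun t _ => (hWd t).continuousAt.continuousWithinAt)
      (fun t _ => (hWd t).differentiableAt.differentiableWithinAt) fun t ht => ?_
    rw [(hWd t).deriv]
    rw [interior_Ici] at ht
    have h1 := hT t (le_of_lt ht)
    have h2 := hV' t
    have h3 := mul_lt_mul_of_pos_left h1 hε
    linarith
  have hpos : 0 < ε * (ℓ / 2) := by positivity
  have hs : 0 ≤ (V T + 1) / (ε * (ℓ / 2)) := div_nonneg (by linarith [hV0 T]) hpos.le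
  have h1 := hanti (Set.mem_Ici.2 le_rfl) (Set.mem_Ici.2 (show T ≤ T + (V T + 1) / (ε * (ℓ / 2)) by linarith)) (by linarith)
  have h2 := hV0 (T + (V T + 1) / (ε * (ℓ / 2)))
  simp only [hW, mul_add, mul_div_cancel₀ _ hpos.ne'] at h1
  linarith

/-- **Corollary 1** (consensus criterion without zero-equality weighting matrices): if
for each agent `k` there exist `P_k ≻ 0`, `Q_{1k}, Q_{2k} ≻ 0`, `R_{1k}, R_{2k} ≻ 0` and
free matrices `Y_{ikj}` such that the LMI block matrix is negative definite at all `2^m`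
vertices of the delay box, then the delayed multi-agent system achieves consensus:
`x_i(t) − x_j(t) → 0` as `t → ∞` for all agents `i, j`. -/
theorem corollary1_consensus (m n r N : ℕ) (hm : 2 ≤ m) (hn : 1 ≤ n) (hN : 1 ≤ N)
    (A : Matrix (Fin n) (Fin n) ℝ) (B : Matrix (Fin n) (Fin r) ℝ)
    (K : Matrix (Fin r) (Fin n) ℝ) (adj : Fin m → Fin m → ℝ)
    (τl τu : Fin m → ℝ) (τ : Fin m → ℝ → ℝ)
    (hτcont : ∀ k, Continuous (τ k))
    (hτbound : ∀ k t, 0 ≤ τl k ∧ τl k ≤ τ k t ∧ τ k t ≤ τu k)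
    (x : Fin m → ℝ → Fin n → ℝ)
    (hdyn : ∀ (k : Fin m) (t : ℝ), HasDerivAt (x k)
      (A.mulVec (x k t) + B.mulVec (uCtrl m n r K adj x k (t - τ k t))) t)
    (P : Fin m → Matrix (Fin 3 × ag m n) (Fin 3 × ag m n) ℝ)
    (Q1 Q2 : Fin m → Matrix (ag m n) (ag m n) ℝ)
    (R1 R2 : Fin m → Matrix (ag m n ⊕ ag m n) (ag m n ⊕ ag m n) ℝ)
    (Y : Fin 3 → Fin m → Fin (2 * N + 1) → Matrix (bg m n N) (ag m n) ℝ)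
    (hP : ∀ k, (P k).PosDef) (hQ1 : ∀ k, (Q1 k).PosDef) (hQ2 : ∀ k, (Q2 k).PosDef)
    (hR1 : ∀ k, (R1 k).PosDef) (hR2 : ∀ k, (R2 k).PosDef)
    (hLMI : ∀ τv : Fin m → ℝ, (∀ k, τv k = τl k ∨ τv k = τu k) →
      (-(LMImatC m n r N A adj B K τl τu τv P Q1 Q2 R1 R2 Y)).PosDef) :
    ∀ i j : Fin m,
      Filter.Tendsto (fun t => x i t - x j t) Filter.atTop (nhds (0 : Fin n → ℝ)) := by
  obtain ⟨M, rfl⟩ : ∃ M, m = M + 1 := ⟨m - 1, by omega⟩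
  have hm' : 0 < M + 1 := by omega
  set z : ℝ → ag (M+1) n → ℝ := fun t p => x 0 t p.2 - x ⟨(p.1:ℕ)+1, by omega⟩ t p.2 with hzdef
  set zd : ℝ → ag (M+1) n → ℝ := fun t =>
    Abar (M+1) n A *ᵥ z t - ∑ k, Bbar (M+1) n r adj B K k *ᵥ z (t - τ k t) with hzd
  have hz : ∀ t c, HasDerivAt (fun s => z s c) (zd t c) t :=
    fun t c => z_dyn M n r A B K adj τ x hdyn z hzdef t c
  have hzc : ∀ c, Continuous fun s => z s c := fun c =>
    continuous_iff_continuousAt.2 fun t => (hz t c).continuousAt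
  have hzC : Continuous z := continuous_pi hzc
  have hzdC : Continuous zd := by
    rw [hzd]
    refine Continuous.sub (Continuous.matrix_mulVec continuous_const hzC) ?_
    refine continuous_finsetSum _ fun k _ => Continuous.matrix_mulVec continuous_const ?_
    exact hzC.comp (continuous_id.sub (hτcont k))
  obtain ⟨ε, hε, hmain⟩ := LMI_main (M+1) n r N A adj B K τl τu P Q1 Q2 R1 R2 Y hLMI
  choose V V' c hc hVd hVc hV' using agent_lyap (M+1) n r N hm' hN A adj B K τl τu τ hτbound P Q1 Q2 R1 R2 Y
    hP hQ1 hQ2 hR1 hR2 z zd hz hzdC (fun t => rfl)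
  have hdec : ∀ t, ∑ k, V' k t ≤ -(ε * (z t ⬝ᵥ z t)) := by
    intro t
    refine (Finset.sum_le_sum fun k _ => hV' k t).trans ?_
    refine (hmain _ _ _ fun k => (hτbound k t).2).trans ?_
    have := mul_le_mul_of_nonneg_left (zetaB_dot (M+1) n N hm' (z t)
      (Zd (M+1) n N (fun k => z (t - τl k)) (fun k => z (t - τu k)) (fun k => z (t - τ k t))
      (IM (M+1) n τl τu (fun k => τ k t) z t))) hε.le
    exact neg_le_neg this
  have hf0 : ∀ t, 0 ≤ z t ⬝ᵥ z t := fun t => Finset.sum_nonneg fun _ _ => mul_self_nonneg _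
  have hVk0 : ∀ k t, 0 ≤ V k t := fun k t => (mul_nonneg (hc k).le (hf0 t)).trans (hVc k t)
  have hVsd : ∀ t, HasDerivAt (fun t => ∑ k, V k t) (∑ k, V' k t) t := fun t =>
    HasDerivAt.fun_sum fun k _ => hVd k t
  have hVanti : Antitone fun t => ∑ k, V k t := by
    refine antitone_of_deriv_nonpos (fun t => (hVsd t).differentiableAt) fun t => ?_
    rw [(hVsd t).deriv]
    have := mul_nonneg hε.le (hf0 t)
    linarith [hdec t]
  have hfd : ∀ t, HasDerivAt (fun t => z t ⬝ᵥ z t) (2 * (zd t ⬝ᵥ z t)) t := by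
    intro t
    simp only [dotProduct]
    rw [Finset.mul_sum]
    refine HasDerivAt.fun_sum fun p _ => ?_
    have h := (hz t p).mul (hz t p)
    have e : zd t p * z t p + z t p * zd t p = 2 * (zd t p * z t p) := by ring
    rw [e] at h
    exact h
  -- uniform bound on the coordinates
  set T : ℝ := ∑ k, τu k with hT
  have hτu0 : ∀ k, 0 ≤ τu k := fun k => (hτbound k 0).1.trans ((hτbound k 0).2.1.trans (hτbound k 0).2.2)
  have hτT : ∀ k t, τ k t ≤ T := fun k t => (hτbound k t).2.2.trans
    (Finset.single_le_sum (f := τu) (fun k _ => hτu0 k) (Finset.mem_univ k))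
  have hT0 : 0 ≤ T := Finset.sum_nonneg fun k _ => hτu0 k
  set b : ℝ := (∑ k, V k (-T)) / c 0 with hb
  have hbound : ∀ s, -T ≤ s → ∀ p, |z s p| ≤ b + 1 := by
    intro s hs p
    have h1 : c 0 * (z s ⬝ᵥ z s) ≤ ∑ k, V k (-T) :=
      ((hVc 0 s).trans (Finset.single_le_sum (f := fun k => V k s) (fun k _ => hVk0 k s) (Finset.mem_univ 0))).trans
        (hVanti hs)
    have h2 : z s ⬝ᵥ z s ≤ b := by
      rw [hb, le_div_iff₀ (hc 0)]; linarith
    have h3 : z s p * z s p ≤ z s ⬝ᵥ z s :=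
      Finset.single_le_sum (f := fun p => z s p * z s p) (fun p _ => mul_self_nonneg _) (Finset.mem_univ p)
    have h4 : |z s p| * |z s p| ≤ b := by rw [abs_mul_abs_self]; linarith
    nlinarith [abs_nonneg (z s p), sq_nonneg (|z s p| - 1)]
  have hcompact : IsCompact (Set.Icc (fun _ => -(b+1), fun _ _ => -(b+1)) (fun _ => b+1, fun _ _ => b+1) :
      Set ((ag (M+1) n → ℝ) × (Fin (M+1) → ag (M+1) n → ℝ))) := isCompact_Icc
  have hFc : Continuous fun q : (ag (M+1) n → ℝ) × (Fin (M+1) → ag (M+1) n → ℝ) =>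
      2 * ((Abar (M+1) n A *ᵥ q.1 - ∑ k, Bbar (M+1) n r adj B K k *ᵥ q.2 k) ⬝ᵥ q.1) := by
    simp only [dotProduct, mulVec, Pi.sub_apply, Finset.sum_apply]
    fun_prop
  obtain ⟨C, hC⟩ := hcompact.bddAbove_image hFc.continuousOn
  have hfC : ∀ t, 0 ≤ t → 2 * (zd t ⬝ᵥ z t) ≤ max C 0 := by
    intro t ht
    refine le_trans (hC ⟨(z t, fun k => z (t - τ k t)), ?_, rfl⟩) (le_max_left _ _)
    have h1 : ∀ p, |z t p| ≤ b + 1 := hbound t (by linarith)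
    have h2 : ∀ k p, |z (t - τ k t) p| ≤ b + 1 := fun k => hbound _ (by linarith [hτT k t])
    exact ⟨⟨fun p => (abs_le.1 (h1 p)).1, fun k p => (abs_le.1 (h2 k p)).1⟩,
      ⟨fun p => (abs_le.1 (h1 p)).2, fun k p => (abs_le.1 (h2 k p)).2⟩⟩
  have hlim : Filter.Tendsto (fun t => z t ⬝ᵥ z t) Filter.atTop (nhds 0) :=
    conv_zero _ _ _ _ hfd hVsd ε hε hdec hf0 (fun t => Finset.sum_nonneg fun k _ => hVk0 k t)
      (max C 0) (le_max_right _ _) hfC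
  have hzlim : ∀ p, Filter.Tendsto (fun t => z t p) Filter.atTop (nhds 0) := by
    intro p
    have h1 : Filter.Tendsto (fun t => Real.sqrt (z t ⬝ᵥ z t)) Filter.atTop (nhds 0) := by
      have := (Real.continuous_sqrt.tendsto 0).comp hlim
      rw [Real.sqrt_zero] at this
      exact this
    refine squeeze_zero_norm (fun t => ?_) h1
    rw [Real.norm_eq_abs]
    refine Real.abs_le_sqrt ?_
    rw [sq]
    exact Finset.single_le_sum (f := fun p => z t p * z t p) (fun p _ => mul_self_nonneg _) (Finset.mem_univ p)
  have hx0 : ∀ (i : Fin (M+1)) (d : Fin n), Filter.Tendsto (fun t => x 0 t d - x i t d) Filter.atTop (nhds 0) := by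
    intro i d
    rcases Fin.eq_zero_or_eq_succ i with rfl | ⟨j, rfl⟩
    · simp
    · exact hzlim ((j : Fin (M+1-1)), d)
  intro i j
  refine tendsto_pi_nhds.2 fun d => ?_
  have := (hx0 j d).sub (hx0 i d)
  rw [sub_zero] at this
  refine this.congr fun t => ?_
  simp only [Pi.sub_apply]
  ring
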